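/- Fix an integer n ≥ 1, a real ε > 0, and ν ∈ ℂ with Re ν ≥ −1/2. Let ζ : (0,∞)ⁿ → ℂ be infinitely differentiable with ζ(ω) = 0 whenever some coordinate ω_i > ε, and suppose T^{ν}_p(ζ) < ∞ for every multi-index p (i.e., ζ ∈ 𝒜_{ν,ε}). Define η : (0,∞)ⁿ → ℂ by η(y) = ∫_{(0,∞)ⁿ} ζ(ω) · ∏_{k=1}^n (ω_k y_k)^{1/2} · J_ν(ω_k y_k) dω. Then for every ω ∈ (0,∞)ⁿ: lim_{s→∞} ∫_{(0,s)ⁿ} η(y) · ∏_{k=1}^n (ω_k y_k)^{1/2} · J_ν(ω_k y_k) dy = ζ(ω). (Inversion formula for the n-dimensional Hankel transformation of order ν.) -/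

import Mathlib

/-!
Write `h_ν(x) = √x J_ν(x)` (`hankelKer`) and let `H` (`hankelT`) be the integral transform on the
orthant with kernel `∏ₖ h_ν(xₖyₖ)`, so that `η = H ζ`. The claim is `H (H ζ) = ζ`, together with the
integrability of `H ζ`, which makes the integrals over the cubes `(0,s)ⁿ` converge to the integral
over the orthant.

The kernel `h_ν` is bounded: near `0` by its series, using `Re ν ≥ -1/2`, and near `∞` by an energy
estimate for Bessel's equation (`hankelKer_bounded`). Hence `H` maps `L¹` to bounded continuous
functions and is symmetric for the pairing `∫ f g` (`hankelT_duality`).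

*Inversion.* For the Gaussians `g_a(x) = ∏ₖ xₖ^{ν+1/2} e^{-aₖxₖ²}`, term-by-term integration of the
Bessel series gives `H g_a` as a multiple of a Gaussian (`hankelGauss_transform`), and
`H (H g_a) = g_a`. By symmetry, `∫ (H H ζ) g_a = ∫ ζ (H H g_a) = ∫ ζ g_a`, so the bounded continuous
function `D = H H ζ - ζ` has vanishing Gaussian moments. In the variables `e^{-xₖ²}` these are
moments against all polynomials on the cube, so Stone–Weierstrass gives `D = 0`
(`eq_zero_of_gauss_moments`).

*Integrability of `H ζ`.* Write `ζ = ∏ₖ xₖ^{ν+1/2} G`. Since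
`d/dx (x^{ν+1/2} h_{ν+1}(xy)) = y x^{ν+1/2} h_ν(xy)`, one integration by parts in the `i`-th
coordinate replaces `G` by `xᵢ⁻¹ ∂ᵢ G`, raises the order of the kernel in that coordinate by one, and
gains a factor `1/yᵢ` (`BoxFn.shiftT_step`). The functions `∏ᵢ (xᵢ⁻¹∂ᵢ)^{pᵢ} G` are bounded because
the seminorms of `ζ` are finite, and they vanish outside the box `(0,ε]ⁿ`. Integrating by parts twice
in every coordinate with `yᵢ > 1` bounds `H ζ` by a multiple of `∏ᵢ (1 + yᵢ²)⁻¹`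
(`BoxFn.shiftT_decay`).
-/

open Complex MeasureTheory
open scoped ENNReal NNReal

/-- Complex Bessel function of the first kind, defined by its series with
principal complex powers; `1/Γ` is `0` at the poles of `Γ`. -/
noncomputable def besselJ (ν z : ℂ) : ℂ :=
  ∑' s : ℕ, ((-1 : ℂ) ^ s / ((s.factorial : ℂ) * Complex.Gamma (ν + s + 1))) *
    (z / 2) ^ (ν + 2 * s)

/-- The open positive orthant `(0,∞)ⁿ`. -/
def posOrthant (n : ℕ) : Set (Fin n → ℝ) := {ω | ∀ i, 0 < ω i}

/-- The operator `ω_i⁻¹ ∂/∂ω_i` (partial derivative in the `i`-th coordinate,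
divided by `ω_i`). -/
noncomputable def wDeriv (n : ℕ) (i : Fin n) (f : (Fin n → ℝ) → ℂ) :
    (Fin n → ℝ) → ℂ :=
  fun ω => (ω i)⁻¹ • fderiv ℝ f ω (Pi.single i 1)

/-- The iterated operator `∏_{i=1}^n (ω_i⁻¹ ∂/∂ω_i)^{p_i}`. -/
noncomputable def multiWDeriv (n : ℕ) (p : Fin n → ℕ) (f : (Fin n → ℝ) → ℂ) :
    (Fin n → ℝ) → ℂ :=
  (List.finRange n).foldr (fun i g => (wDeriv n i)^[p i] g) f

/-- Multiplication by the weight `(∏ᵢ ωᵢ)^{−μ−1/2}` (positive real base,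
principal power). -/
noncomputable def weightFn (n : ℕ) (μ : ℂ) (f : (Fin n → ℝ) → ℂ) :
    (Fin n → ℝ) → ℂ :=
  fun ω => (((∏ i, ω i : ℝ) : ℂ) ^ (-μ - 1 / 2)) * f ω

/-- The Zemanian-type seminorm
`T^μ_p(f) = sup_{ω ∈ (0,∞)ⁿ} |∏ᵢ (ωᵢ⁻¹∂ᵢ)^{pᵢ} ((∏ᵢωᵢ)^{−μ−1/2} f(ω))|`. -/
noncomputable def Tsem (n : ℕ) (μ : ℂ) (p : Fin n → ℕ) (f : (Fin n → ℝ) → ℂ) : ℝ≥0∞ :=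
  ⨆ ω ∈ posOrthant n, (‖multiWDeriv n p (weightFn n μ f) ω‖₊ : ℝ≥0∞)

/-- Membership in the testing space `𝒜_{μ,ε}`: smooth on `(0,∞)ⁿ`, vanishing as soon
as some coordinate exceeds `ε`, and all seminorms `T^μ_p` finite. -/
def memA (n : ℕ) (ε : ℝ) (μ : ℂ) (f : (Fin n → ℝ) → ℂ) : Prop :=
  ContDiffOn ℝ (⊤ : ℕ∞) f (posOrthant n) ∧
  (∀ ω ∈ posOrthant n, (∃ i, ε < ω i) → f ω = 0) ∧
  ∀ p : Fin n → ℕ, Tsem n μ p f < ⊤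

/-- The partial derivative `∂/∂ω_i`. -/
noncomputable def pDeriv (n : ℕ) (i : Fin n) (f : (Fin n → ℝ) → ℂ) :
    (Fin n → ℝ) → ℂ :=
  fun ω => fderiv ℝ f ω (Pi.single i 1)

/-- The mixed derivative `∂ⁿ/∂ω₁⋯∂ω_n`. -/
noncomputable def mixedDeriv (n : ℕ) (f : (Fin n → ℝ) → ℂ) : (Fin n → ℝ) → ℂ :=
  (List.finRange n).foldr (fun i g => pDeriv n i g) f

/-- The differential operator
`(N_μ f)(ω) = (∏ᵢωᵢ)^{μ+1/2} ∂ⁿ/∂ω₁⋯∂ω_n ((∏ᵢωᵢ)^{−μ−1/2} f(ω))`. -/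
noncomputable def Nop (n : ℕ) (μ : ℂ) (f : (Fin n → ℝ) → ℂ) : (Fin n → ℝ) → ℂ :=
  fun ω => (((∏ i, ω i : ℝ) : ℂ) ^ (μ + 1 / 2)) * mixedDeriv n (weightFn n μ f) ω

/-! ### The entire function underlying the Bessel function -/

/-- The Taylor coefficients `(-1)^s / (s! Γ(ν+s+1))` of `besselLam ν`. -/
noncomputable def besselCoeff (ν : ℂ) (s : ℕ) : ℂ :=
  (-1 : ℂ) ^ s / ((s.factorial : ℂ) * Complex.Gamma (ν + s + 1))

/-- The entire function `Λ_ν(t) = ∑ (-1)^s t^s / (s! Γ(ν+s+1))`, for which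
`J_ν(x) = (x/2)^ν Λ_ν(x²/4)` when `x > 0`. -/
noncomputable def besselLam (ν t : ℂ) : ℂ := ∑' s : ℕ, besselCoeff ν s * t ^ s

/-- `|Γ(ν+s+1)|` grows in `s` at least as fast as `Γ(Re ν+s+1)`. It compares the norms of the terms
of the Bessel series with absolutely convergent integrals. -/
lemma gamma_lower_bound {ν : ℂ} (hν : -(1 / 2 : ℝ) ≤ ν.re) (s : ℕ) :
    ‖Complex.Gamma (ν + 1)‖ * Real.Gamma (ν.re + s + 1) ≤
      Real.Gamma (ν.re + 1) * ‖Complex.Gamma (ν + s + 1)‖ := by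
  induction s with
  | zero => simp [mul_comm]
  | succ s ih =>
    have hs : (0 : ℝ) ≤ s := Nat.cast_nonneg s
    have hpos : 0 < ν.re + s + 1 := by linarith
    have hne : ν + s + 1 ≠ 0 := by
      intro h
      have := congrArg Complex.re h
      simp at this
      linarith
    have h1 : Real.Gamma (ν.re + (s + 1 : ℕ) + 1) =
        (ν.re + s + 1) * Real.Gamma (ν.re + s + 1) := by
      rw [← Real.Gamma_add_one hpos.ne']
      push_cast
      ring_nf
    have h2 : Complex.Gamma (ν + (s + 1 : ℕ) + 1) =
        (ν + s + 1) * Complex.Gamma (ν + s + 1) := by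
      rw [← Complex.Gamma_add_one _ hne]
      push_cast
      ring_nf
    have h3 : ν.re + s + 1 ≤ ‖ν + s + 1‖ := by
      have := Complex.re_le_norm (ν + s + 1)
      simpa using this
    rw [h1, h2, norm_mul]
    have h4 : 0 ≤ ‖Complex.Gamma (ν + 1)‖ * Real.Gamma (ν.re + s + 1) :=
      mul_nonneg (norm_nonneg _) (Real.Gamma_pos_of_pos hpos).le
    calc _ = (ν.re + s + 1) * (‖Complex.Gamma (ν + 1)‖ * Real.Gamma (ν.re + s + 1)) := by ring
      _ ≤ ‖ν + s + 1‖ * (Real.Gamma (ν.re + 1) * ‖Complex.Gamma (ν + s + 1)‖) := by gcongr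
      _ = _ := by ring

lemma gamma_shift_ne_zero {ν : ℂ} (hν : -(1 / 2 : ℝ) ≤ ν.re) (s : ℕ) :
    Complex.Gamma (ν + s + 1) ≠ 0 := by
  apply Complex.Gamma_ne_zero_of_re_pos
  have hs : (0 : ℝ) ≤ s := Nat.cast_nonneg s
  simp
  linarith

lemma gamma_lower_bound_geom {ν : ℂ} (hν : -(1 / 2 : ℝ) ≤ ν.re) (s : ℕ) :
    ‖Complex.Gamma (ν + 1)‖ ≤ 2 ^ s * ‖Complex.Gamma (ν + s + 1)‖ := by
  induction s with
  | zero => simp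
  | succ s ih =>
    have hs : (0 : ℝ) ≤ s := Nat.cast_nonneg s
    have hne : ν + s + 1 ≠ 0 := by
      intro h
      have := congrArg Complex.re h
      simp at this
      linarith
    have h2 : Complex.Gamma (ν + (s + 1 : ℕ) + 1) =
        (ν + s + 1) * Complex.Gamma (ν + s + 1) := by
      rw [← Complex.Gamma_add_one _ hne]
      push_cast
      ring_nf
    have h3 : 1 / 2 ≤ ‖ν + s + 1‖ := by
      have := Complex.re_le_norm (ν + s + 1)
      simp at this
      linarith
    rw [h2, norm_mul]
    refine ih.trans ?_
    have : 0 ≤ 2 ^ s * ‖Complex.Gamma (ν + s + 1)‖ := by positivity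
    rw [pow_succ]
    nlinarith

lemma norm_besselCoeff_le {ν : ℂ} (hν : -(1 / 2 : ℝ) ≤ ν.re) (s : ℕ) :
    ‖besselCoeff ν s‖ ≤ ‖Complex.Gamma (ν + 1)‖⁻¹ * (2 ^ s / s.factorial) := by
  have h0 : 0 < ‖Complex.Gamma (ν + 1)‖ := by
    have := gamma_shift_ne_zero hν 0
    simpa using this
  have h1 : 0 < ‖Complex.Gamma (ν + s + 1)‖ := norm_pos_iff.2 (gamma_shift_ne_zero hν s)
  have hf : (0 : ℝ) < s.factorial := by positivity
  have h2 := gamma_lower_bound_geom hν s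
  simp only [besselCoeff, norm_div, norm_mul, norm_pow, norm_neg, norm_one, one_pow,
    Complex.norm_natCast]
  rw [inv_mul_eq_div, div_div, div_le_div_iff₀ (by positivity) (by positivity)]
  nlinarith

lemma besselCoeff_bound {ν : ℂ} (hν : -(1 / 2 : ℝ) ≤ ν.re) {R : ℝ} (s : ℕ) {w : ℂ}
    (hw : ‖w‖ ≤ R) :
    ‖besselCoeff ν s * w ^ s‖ ≤ ‖Complex.Gamma (ν + 1)‖⁻¹ * ((2 * R) ^ s / s.factorial) := by
  rw [norm_mul, norm_pow]
  have h1 := norm_besselCoeff_le hν s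
  have h2 : ‖w‖ ^ s ≤ R ^ s := by gcongr
  calc _ ≤ (‖Complex.Gamma (ν + 1)‖⁻¹ * (2 ^ s / s.factorial)) * R ^ s := by gcongr
    _ = _ := by rw [mul_pow]; ring

lemma besselCoeff_bound_summable (ν : ℂ) (R : ℝ) :
    Summable fun s : ℕ => ‖Complex.Gamma (ν + 1)‖⁻¹ * ((2 * R) ^ s / s.factorial) :=
  (Real.summable_pow_div_factorial (2 * R)).mul_left _

lemma besselLam_hasSum {ν : ℂ} (hν : -(1 / 2 : ℝ) ≤ ν.re) (t : ℂ) :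
    HasSum (fun s : ℕ => besselCoeff ν s * t ^ s) (besselLam ν t) :=
  (Summable.of_norm_bounded (besselCoeff_bound_summable ν ‖t‖)
    (fun s => besselCoeff_bound hν s le_rfl)).hasSum

lemma re_succ {ν : ℂ} (hν : -(1 / 2 : ℝ) ≤ ν.re) : -(1 / 2 : ℝ) ≤ (ν + 1).re := by
  simp only [add_re, one_re]; linarith

lemma besselCoeff_succ (ν : ℂ) (s : ℕ) :
    besselCoeff ν (s + 1) * (s + 1 : ℕ) = -besselCoeff (ν + 1) s := by
  have hs : ((s : ℂ) + 1) ≠ 0 := Nat.cast_add_one_ne_zero s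
  have hf : (s.factorial : ℂ) ≠ 0 := by exact_mod_cast s.factorial_ne_zero
  have h : ν + (s + 1 : ℕ) + 1 = ν + 1 + s + 1 := by push_cast; ring
  rw [besselCoeff, besselCoeff, h, Nat.factorial_succ]
  by_cases hG : Complex.Gamma (ν + 1 + s + 1) = 0
  · simp [hG]
  · push_cast
    field_simp
    ring

lemma besselLam_hasDerivAt {ν : ℂ} (hν : -(1 / 2 : ℝ) ≤ ν.re) (t : ℂ) :
    HasDerivAt (besselLam ν) (-besselLam (ν + 1) t) t := by
  set R : ℝ := ‖t‖ + 1
  have hbd : ∀ (s : ℕ), ∀ w ∈ Metric.ball (0 : ℂ) R, ‖besselCoeff ν s * w ^ s‖ ≤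
      ‖Complex.Gamma (ν + 1)‖⁻¹ * ((2 * R) ^ s / s.factorial) := by
    intro s w hw
    exact besselCoeff_bound hν s (by simpa using (mem_ball_zero_iff.1 hw).le)
  have hdiff : ∀ s : ℕ, DifferentiableOn ℂ (fun w => besselCoeff ν s * w ^ s)
      (Metric.ball (0 : ℂ) R) := fun s => by fun_prop
  have ht : t ∈ Metric.ball (0 : ℂ) R := by simp [R]
  have hsum := hasSum_deriv_of_summable_norm (besselCoeff_bound_summable ν R) hdiff
    Metric.isOpen_ball hbd ht
  have hD := (differentiableOn_tsum_of_summable_norm (besselCoeff_bound_summable ν R) hdiff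
    Metric.isOpen_ball hbd).differentiableAt (Metric.isOpen_ball.mem_nhds ht)
  have hval : deriv (fun w => ∑' i, besselCoeff ν i * w ^ i) t = -besselLam (ν + 1) t := by
    refine hsum.unique ?_
    rw [← hasSum_nat_add_iff' 1]
    have := (besselLam_hasSum (re_succ hν) t).neg
    simp only [deriv_const_mul_field', Finset.range_one, Finset.sum_singleton]
    simp only [pow_zero, deriv_const, mul_zero, sub_zero]
    convert this using 2 with s
    rw [deriv_pow_field, ← mul_assoc, besselCoeff_succ]
    simp
  rw [← hval]
  exact hD.hasDerivAt

/-- The three-term recurrence, equivalent to `J_ν + J_{ν+2} = (2(ν+1)/x) J_{ν+1}`. -/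
lemma besselLam_recurrence {ν : ℂ} (hν : -(1 / 2 : ℝ) ≤ ν.re) (t : ℂ) :
    besselLam ν t = (ν + 1) * besselLam (ν + 1) t - t * besselLam (ν + 2) t := by
  have hν1 := re_succ hν
  have h2 : ν + 2 = ν + 1 + 1 := by ring
  have e1 := besselLam_hasSum hν t
  have e2 := (besselLam_hasSum hν1 t).mul_left (ν + 1)
  have e3 : HasSum (fun s : ℕ => (s : ℂ) * besselCoeff (ν + 1) s * t ^ s)
      (-(t * besselLam (ν + 2) t)) := by
    rw [← hasSum_nat_add_iff' 1]
    simp only [Finset.range_one, Finset.sum_singleton, Nat.cast_zero, zero_mul, sub_zero]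
    rw [h2]
    convert ((besselLam_hasSum (re_succ hν1) t).mul_left t).neg using 2 with s
    have := besselCoeff_succ (ν + 1) s
    rw [mul_comm ((s + 1 : ℕ) : ℂ), this, pow_succ]
    ring
  rw [sub_eq_add_neg]
  have key : (fun s : ℕ => besselCoeff ν s * t ^ s) = fun s : ℕ =>
      (ν + 1) * (besselCoeff (ν + 1) s * t ^ s) + (s : ℂ) * besselCoeff (ν + 1) s * t ^ s := by
    funext s
    have hne : ν + s + 1 ≠ 0 := by
      intro h
      have := congrArg Complex.re h
      have hs : (0 : ℝ) ≤ s := Nat.cast_nonneg s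
      simp at this
      linarith
    have hG : Complex.Gamma (ν + 1 + s + 1) = (ν + s + 1) * Complex.Gamma (ν + s + 1) := by
      rw [← Complex.Gamma_add_one _ hne]
      ring_nf
    have hG0 := gamma_shift_ne_zero hν s
    have hf : (s.factorial : ℂ) ≠ 0 := by exact_mod_cast s.factorial_ne_zero
    rw [besselCoeff, besselCoeff, hG]
    field_simp
    ring
  rw [key] at e1
  exact e1.unique (e2.add e3)

lemma besselLam_continuous {ν : ℂ} (hν : -(1 / 2 : ℝ) ≤ ν.re) : Continuous (besselLam ν) :=
  continuous_iff_continuousAt.2 fun t => (besselLam_hasDerivAt hν t).continuousAt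

/-! ### The Hankel kernel `√x J_ν(x)` -/

/-- The Hankel kernel `√x J_ν(x)` for `x > 0`, written through `besselLam` and extended by `0` to
`x ≤ 0`, so that its bound for `x > 0` holds on all of `ℝ`. -/
noncomputable def hankelKer (ν : ℂ) (x : ℝ) : ℂ :=
  if 0 < x then ((1 / 2 : ℝ) : ℂ) ^ ν * (x : ℂ) ^ (ν + 1 / 2) * besselLam ν ((x : ℂ) ^ 2 / 4) else 0

lemma hankelKer_of_pos (ν : ℂ) {x : ℝ} (hx : 0 < x) : hankelKer ν x =
    ((1 / 2 : ℝ) : ℂ) ^ ν * (x : ℂ) ^ (ν + 1 / 2) * besselLam ν ((x : ℂ) ^ 2 / 4) := if_pos hx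

lemma sqrt_mul_besselJ (ν : ℂ) {x : ℝ} (hx : 0 < x) :
    (x : ℂ) ^ (1 / 2 : ℂ) * besselJ ν (x : ℂ) = hankelKer ν x := by
  have hxc : (x : ℂ) ≠ 0 := by exact_mod_cast hx.ne'
  have hx2 : (x : ℂ) / 2 ≠ 0 := div_ne_zero hxc two_ne_zero
  have h1 : ((x : ℂ) / 2) ^ ν = ((1 / 2 : ℝ) : ℂ) ^ ν * (x : ℂ) ^ ν := by
    rw [← Complex.mul_cpow_ofReal_nonneg (by norm_num) hx.le]
    congr 1
    push_cast
    ring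
  have h2 : besselJ ν (x : ℂ) = ((x : ℂ) / 2) ^ ν * besselLam ν ((x : ℂ) ^ 2 / 4) := by
    rw [besselJ, besselLam, ← tsum_mul_left]
    refine tsum_congr fun s => ?_
    rw [Complex.cpow_add _ _ hx2, show (2 * (s : ℂ)) = ((2 * s : ℕ) : ℂ) by push_cast; ring,
      Complex.cpow_natCast, pow_mul, besselCoeff, div_pow]
    norm_num
    ring
  rw [h2, h1, hankelKer_of_pos ν hx, Complex.cpow_add _ _ hxc]
  ring

lemma hasDerivAt_ofReal_cpow (c : ℂ) {x : ℝ} (hx : 0 < x) :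
    HasDerivAt (fun t : ℝ => (t : ℂ) ^ c) (c * (x : ℂ) ^ (c - 1)) x := by
  have h : HasDerivAt (fun z : ℂ => z ^ c) (c * (x : ℂ) ^ (c - 1)) (x : ℂ) := by
    have := (hasDerivAt_id (x : ℂ)).cpow_const (c := c) (Or.inl (by simpa using hx))
    simpa using this
  exact h.comp_ofReal

lemma hasDerivAt_besselLam_sq {ν : ℂ} (hν : -(1 / 2 : ℝ) ≤ ν.re) (b : ℂ) (x : ℝ) :
    HasDerivAt (fun t : ℝ => besselLam ν ((t * b : ℂ) ^ 2 / 4))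
      (-besselLam (ν + 1) ((x * b : ℂ) ^ 2 / 4) * (x * b ^ 2 / 2)) x := by
  have h : HasDerivAt (fun z : ℂ => besselLam ν ((z * b) ^ 2 / 4))
      (-besselLam (ν + 1) ((x * b : ℂ) ^ 2 / 4) * (x * b ^ 2 / 2)) (x : ℂ) := by
    have h1 : HasDerivAt (fun z : ℂ => (z * b) ^ 2 / 4) (x * b ^ 2 / 2) (x : ℂ) := by
      have := ((((hasDerivAt_id (x : ℂ)).mul_const b).pow 2).div_const 4)
      refine this.congr_deriv ?_
      simp
      ring
    exact (besselLam_hasDerivAt hν _).comp (x : ℂ) h1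
  exact h.comp_ofReal

lemma half_cpow_succ (ν : ℂ) :
    ((1 / 2 : ℝ) : ℂ) ^ (ν + 1) = ((1 / 2 : ℝ) : ℂ) ^ ν * (1 / 2) := by
  rw [Complex.cpow_add _ _ (by norm_num), Complex.cpow_one]
  push_cast
  ring

lemma hankelKer_eventuallyEq (ν : ℂ) {x : ℝ} (hx : 0 < x) :
    hankelKer ν =ᶠ[nhds x] fun t : ℝ =>
      ((1 / 2 : ℝ) : ℂ) ^ ν * ((t : ℂ) ^ (ν + 1 / 2) * besselLam ν ((t * 1 : ℂ) ^ 2 / 4)) := by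
  filter_upwards [lt_mem_nhds hx] with t ht
  rw [hankelKer_of_pos ν ht, mul_one]
  ring

/-- `h_ν' = ((ν + 1/2)/x) h_ν - h_{ν+1}`. -/
lemma hankelKer_hasDerivAt {ν : ℂ} (hν : -(1 / 2 : ℝ) ≤ ν.re) {x : ℝ} (hx : 0 < x) :
    HasDerivAt (hankelKer ν) ((ν + 1 / 2) / x * hankelKer ν x - hankelKer (ν + 1) x) x := by
  have hxc : (x : ℂ) ≠ 0 := by exact_mod_cast hx.ne'
  have h := ((hasDerivAt_ofReal_cpow (ν + 1 / 2) hx).mul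
    (hasDerivAt_besselLam_sq hν 1 x)).const_mul (((1 / 2 : ℝ) : ℂ) ^ ν)
  refine (h.congr_of_eventuallyEq (hankelKer_eventuallyEq ν hx)).congr_deriv ?_
  rw [hankelKer_of_pos ν hx, hankelKer_of_pos (ν + 1) hx, half_cpow_succ,
    show ν + 1 + 1 / 2 = (ν + 1 / 2) + 1 by ring, Complex.cpow_add (ν + 1 / 2) 1 hxc,
    Complex.cpow_sub _ _ hxc, Complex.cpow_one, mul_one]
  field_simp
  ring

/-- `h_{ν+1}' = h_ν - ((ν + 1/2)/x) h_{ν+1}`. -/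
lemma hankelKer_succ_hasDerivAt {ν : ℂ} (hν : -(1 / 2 : ℝ) ≤ ν.re) {x : ℝ} (hx : 0 < x) :
    HasDerivAt (hankelKer (ν + 1)) (hankelKer ν x - (ν + 1 / 2) / x * hankelKer (ν + 1) x) x := by
  have hxc : (x : ℂ) ≠ 0 := by exact_mod_cast hx.ne'
  refine (hankelKer_hasDerivAt (re_succ hν) hx).congr_deriv ?_
  rw [hankelKer_of_pos ν hx, hankelKer_of_pos (ν + 1) hx, hankelKer_of_pos (ν + 1 + 1) hx,
    half_cpow_succ (ν + 1), half_cpow_succ ν, besselLam_recurrence hν, show ν + 2 = ν + 1 + 1 by ring,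
    show ν + 1 + 1 + 1 / 2 = (ν + 1 / 2) + 1 + 1 by ring,
    show ν + 1 + 1 / 2 = (ν + 1 / 2) + 1 by ring,
    Complex.cpow_add (ν + 1 / 2 + 1) 1 hxc, Complex.cpow_add (ν + 1 / 2) 1 hxc, Complex.cpow_one]
  field_simp
  ring

lemma hankelKer_measurable {ν : ℂ} (hν : -(1 / 2 : ℝ) ≤ ν.re) : Measurable (hankelKer ν) := by
  unfold hankelKer
  refine Measurable.ite measurableSet_Ioi ?_ measurable_const
  have h1 : Measurable fun x : ℝ => besselLam ν ((x : ℂ) ^ 2 / 4) :=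
    ((besselLam_continuous hν).comp (by fun_prop)).measurable
  exact (measurable_const.mul (measurable_ofReal.pow_const _)).mul h1

lemma hankelKer_continuousOn {ν : ℂ} (hν : -(1 / 2 : ℝ) ≤ ν.re) :
    ContinuousOn (hankelKer ν) (Set.Ioi 0) := fun _ hx =>
  (hankelKer_hasDerivAt hν hx).continuousAt.continuousWithinAt

/-- The kernel solves `h'' = (c/x² - 1) h` with `c = ν² - 1/4`, so the energy
`E = |h|² + |h'|²` satisfies `|E'| ≤ |c| E / x²` and `E e^{|c|/x}` is nonincreasing; this bounds `h` on
`[1,∞)`. -/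
lemma hankelKer_bounded_large {ν : ℂ} (hν : -(1 / 2 : ℝ) ≤ ν.re) :
    ∃ C : ℝ, ∀ x : ℝ, 1 ≤ x → ‖hankelKer ν x‖ ≤ C := by
  set c : ℂ := (ν + 1 / 2) ^ 2 - (ν + 1 / 2) with hc
  -- `g` is the derivative of the kernel
  set g : ℝ → ℂ := fun x => (ν + 1 / 2) / x * hankelKer ν x - hankelKer (ν + 1) x with hg
  have hg' : ∀ x : ℝ, 0 < x → HasDerivAt g (c / x ^ 2 * hankelKer ν x - hankelKer ν x) x := by
    intro x hx
    have hxc : (x : ℂ) ≠ 0 := by exact_mod_cast hx.ne'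
    have h1 : HasDerivAt (fun t : ℝ => (ν + 1 / 2) / (t : ℂ)) (-(ν + 1 / 2) / x ^ 2) x := by
      have : HasDerivAt (fun z : ℂ => (ν + 1 / 2) / z) (-(ν + 1 / 2) / x ^ 2) (x : ℂ) := by
        have := (hasDerivAt_inv hxc).const_mul (ν + 1 / 2)
        refine (this.congr_deriv ?_)
        field_simp
      exact this.comp_ofReal
    refine ((h1.mul (hankelKer_hasDerivAt hν hx)).sub
      (hankelKer_succ_hasDerivAt hν hx)).congr_deriv ?_
    rw [hc]
    field_simp
    ring
  set E : ℝ → ℝ := fun x => ‖hankelKer ν x‖ ^ 2 + ‖g x‖ ^ 2 with hE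
  have hE' : ∀ x : ℝ, 0 < x → HasDerivAt E
      (2 * inner ℝ (g x) (c / x ^ 2 * hankelKer ν x)) x := by
    intro x hx
    refine ((hankelKer_hasDerivAt hν hx).norm_sq.add (hg' x hx).norm_sq).congr_deriv ?_
    change 2 * inner ℝ (hankelKer ν x) (g x) +
      2 * inner ℝ (g x) (c / x ^ 2 * hankelKer ν x - hankelKer ν x) = _
    rw [inner_sub_right (g x), real_inner_comm (hankelKer ν x) (g x)]
    ring
  set H : ℝ → ℝ := fun x => E x * Real.exp (‖c‖ / x) with hH
  have hH' : ∀ x : ℝ, 0 < x → HasDerivAt H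
      ((2 * inner ℝ (g x) (c / x ^ 2 * hankelKer ν x)) * Real.exp (‖c‖ / x) +
        E x * (Real.exp (‖c‖ / x) * (-‖c‖ / x ^ 2))) x := by
    intro x hx
    have h1 : HasDerivAt (fun t : ℝ => ‖c‖ / t) (-‖c‖ / x ^ 2) x := by
      refine ((hasDerivAt_inv hx.ne').const_mul ‖c‖).congr_deriv ?_
      field_simp
    exact (hE' x hx).mul h1.exp
  have hanti : AntitoneOn H (Set.Ici 1) := by
    refine antitoneOn_of_deriv_nonpos (convex_Ici 1) ?_ ?_ ?_
    · intro x hx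
      exact (hH' x (lt_of_lt_of_le one_pos hx)).continuousAt.continuousWithinAt
    · intro x hx
      rw [interior_Ici] at hx
      exact (hH' x (one_pos.trans hx)).differentiableAt.differentiableWithinAt
    · intro x hx
      rw [interior_Ici] at hx
      have hx0 : 0 < x := one_pos.trans hx
      rw [(hH' x hx0).deriv]
      have h1 : inner ℝ (g x) (c / x ^ 2 * hankelKer ν x) ≤
          ‖g x‖ * (‖c‖ / x ^ 2 * ‖hankelKer ν x‖) := by
        refine (real_inner_le_norm _ _).trans (le_of_eq ?_)
        simp [abs_of_pos hx0]
      have h2 : 2 * (‖g x‖ * ‖hankelKer ν x‖) ≤ E x := by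
        simp only [hE]
        nlinarith [sq_nonneg (‖hankelKer ν x‖ - ‖g x‖)]
      have h3 : 2 * inner ℝ (g x) (c / x ^ 2 * hankelKer ν x) ≤ E x * (‖c‖ / x ^ 2) := by
        have : 0 ≤ ‖c‖ / x ^ 2 := by positivity
        calc _ ≤ 2 * (‖g x‖ * (‖c‖ / x ^ 2 * ‖hankelKer ν x‖)) := by linarith
          _ = (2 * (‖g x‖ * ‖hankelKer ν x‖)) * (‖c‖ / x ^ 2) := by ring
          _ ≤ _ := by gcongr
      have h4 : 0 < Real.exp (‖c‖ / x) := Real.exp_pos _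
      have : (2 * inner ℝ (g x) (c / x ^ 2 * hankelKer ν x)) * Real.exp (‖c‖ / x) +
          E x * (Real.exp (‖c‖ / x) * (-‖c‖ / x ^ 2)) =
          (2 * inner ℝ (g x) (c / x ^ 2 * hankelKer ν x) - E x * (‖c‖ / x ^ 2)) *
            Real.exp (‖c‖ / x) := by ring
      rw [this]
      exact mul_nonpos_of_nonpos_of_nonneg (by linarith) h4.le
  refine ⟨Real.sqrt (H 1), fun x hx => Real.le_sqrt_of_sq_le ?_⟩
  have h1 : H x ≤ H 1 := hanti (Set.self_mem_Ici) hx hx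
  have h2 : E x ≤ H x := by
    have hE0 : 0 ≤ E x := by positivity
    have : 1 ≤ Real.exp (‖c‖ / x) := Real.one_le_exp (by positivity)
    simp only [hH]
    nlinarith
  have h3 : ‖hankelKer ν x‖ ^ 2 ≤ E x := by
    simp only [hE]
    nlinarith [sq_nonneg ‖g x‖]
  linarith

lemma hankelKer_bounded {ν : ℂ} (hν : -(1 / 2 : ℝ) ≤ ν.re) :
    ∃ C : ℝ, 0 ≤ C ∧ ∀ x : ℝ, ‖hankelKer ν x‖ ≤ C := by
  obtain ⟨C₁, h₁⟩ := hankelKer_bounded_large hν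
  obtain ⟨C₂, h₂⟩ := (isCompact_Icc (a := (0 : ℝ)) (b := 1)).exists_bound_of_continuousOn
    (f := fun x : ℝ => ((1 / 2 : ℝ) : ℂ) ^ ν * besselLam ν ((x : ℂ) ^ 2 / 4))
    (by
      have : Continuous fun x : ℝ => besselLam ν ((x : ℂ) ^ 2 / 4) :=
        (besselLam_continuous hν).comp (by fun_prop)
      exact (continuous_const.mul this).continuousOn)
  have hC1 : 0 ≤ C₁ := (norm_nonneg _).trans (h₁ 1 le_rfl)
  have hC2 : 0 ≤ C₂ := (norm_nonneg _).trans (h₂ 0 (by simp))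
  refine ⟨C₁ + C₂, by positivity, fun x => ?_⟩
  rcases le_or_gt x 0 with hx | hx
  · rw [hankelKer, if_neg hx.not_gt, norm_zero]
    positivity
  rcases le_or_gt 1 x with hx1 | hx1
  · linarith [h₁ x hx1]
  · have h3 := h₂ x ⟨hx.le, hx1.le⟩
    have h4 : ‖(x : ℂ) ^ (ν + 1 / 2)‖ ≤ 1 := by
      rw [Complex.norm_cpow_eq_rpow_re_of_pos hx]
      refine Real.rpow_le_one hx.le hx1.le ?_
      have : (ν + 1 / 2).re = ν.re + 1 / 2 := by
        rw [add_re]; norm_num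
      rw [this]; linarith
    rw [hankelKer_of_pos ν hx, mul_right_comm, norm_mul]
    have := mul_le_mul h3 h4 (norm_nonneg _) hC2
    linarith

/-- `d/dx (x^{ν+1/2} h_{ν+1}(xy)) = y x^{ν+1/2} h_ν(xy)`, the form of
`(x^{ν+1} J_{ν+1})' = x^{ν+1} J_ν` used for integrating by parts. -/
lemma hasDerivAt_cpow_mul_hankelKer {ν : ℂ} (hν : -(1 / 2 : ℝ) ≤ ν.re) {x y : ℝ} (hx : 0 < x)
    (hy : 0 < y) :
    HasDerivAt (fun t : ℝ => (t : ℂ) ^ (ν + 1 / 2) * hankelKer (ν + 1) (t * y))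
      (y * ((x : ℂ) ^ (ν + 1 / 2) * hankelKer ν (x * y))) x := by
  have hxc : (x : ℂ) ≠ 0 := by exact_mod_cast hx.ne'
  have hyc : (y : ℂ) ≠ 0 := by exact_mod_cast hy.ne'
  have h1 : HasDerivAt (fun t : ℝ => hankelKer (ν + 1) (t * y))
      (y • (hankelKer ν (x * y) - (ν + 1 / 2) / ((x * y : ℝ) : ℂ) * hankelKer (ν + 1) (x * y)))
      x := by
    have h0 : HasDerivAt (fun t : ℝ => t * y) y x := by
      simpa using (hasDerivAt_id x).mul_const y
    exact (hankelKer_succ_hasDerivAt hν (mul_pos hx hy)).scomp x h0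
  refine ((hasDerivAt_ofReal_cpow (ν + 1 / 2) hx).mul h1).congr_deriv ?_
  rw [Complex.cpow_sub _ _ hxc, Complex.cpow_one, Complex.real_smul]
  push_cast
  field_simp
  ring

/-! ### The Hankel transform of a Gaussian -/

/-- The Gaussian `x^{ν+1/2} e^{-a x²}`, whose Hankel transform is again of this form. -/
noncomputable def hankelGauss (ν : ℂ) (a x : ℝ) : ℂ :=
  (x : ℂ) ^ (ν + 1 / 2) * ((Real.exp (-a * x ^ 2) : ℝ) : ℂ)

lemma re_add_half (ν : ℂ) : (ν + 1 / 2).re = ν.re + 1 / 2 := by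
  rw [add_re]; norm_num

lemma norm_hankelGauss (ν : ℂ) (a : ℝ) {x : ℝ} (hx : 0 < x) :
    ‖hankelGauss ν a x‖ = x ^ (ν.re + 1 / 2) * Real.exp (-a * x ^ 2) := by
  rw [hankelGauss, norm_mul, Complex.norm_cpow_eq_rpow_re_of_pos hx, re_add_half,
    Complex.norm_real, Real.norm_eq_abs, abs_of_pos (Real.exp_pos _)]

lemma hankelGauss_measurable (ν : ℂ) (a : ℝ) : Measurable (hankelGauss ν a) := by
  unfold hankelGauss
  exact (measurable_ofReal.pow_const _).mul (measurable_ofReal.comp (by fun_prop))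

lemma rpow_gauss_integrableOn {q a : ℝ} (hq : -1 < q) (ha : 0 < a) :
    IntegrableOn (fun x : ℝ => x ^ q * Real.exp (-a * x ^ 2)) (Set.Ioi 0) := by
  have := integrableOn_rpow_mul_exp_neg_mul_rpow hq (two_pos) ha
  simpa using this

lemma hankelGauss_integrableOn {ν : ℂ} (hν : -(1 / 2 : ℝ) ≤ ν.re) {a : ℝ} (ha : 0 < a) :
    IntegrableOn (hankelGauss ν a) (Set.Ioi 0) := by
  refine Integrable.mono' (rpow_gauss_integrableOn (q := ν.re + 1 / 2) (by linarith) ha)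
    (hankelGauss_measurable ν a).aestronglyMeasurable ?_
  filter_upwards [ae_restrict_mem measurableSet_Ioi] with x hx
  rw [norm_hankelGauss ν a hx]

lemma gauss_moment {ν : ℂ} (hν : -(1 / 2 : ℝ) ≤ ν.re) {a : ℝ} (ha : 0 < a) (s : ℕ) :
    ∫ x in Set.Ioi (0 : ℝ), (x : ℂ) ^ (2 * ν + 1 + 2 * s) * ((Real.exp (-a * x ^ 2) : ℝ) : ℂ) =
      1 / 2 * ((1 / a : ℝ) : ℂ) ^ (ν + s + 1) * Complex.Gamma (ν + s + 1) := by
  have hs : (0 : ℝ) ≤ s := Nat.cast_nonneg s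
  have hre : 0 < (ν + s + 1).re := by simp; linarith
  have h1 := integral_cpow_mul_exp_neg_mul_Ioi hre ha
  rw [← integral_comp_rpow_Ioi_of_pos (p := 2) two_pos] at h1
  have h2 : ∀ x ∈ Set.Ioi (0 : ℝ), (2 * x ^ ((2 : ℝ) - 1)) •
      (((x ^ (2 : ℝ) : ℝ) : ℂ) ^ (ν + s + 1 - 1) * cexp (-(a * (x ^ (2 : ℝ) : ℝ)))) =
      2 * ((x : ℂ) ^ (2 * ν + 1 + 2 * s) * ((Real.exp (-a * x ^ 2) : ℝ) : ℂ)) := by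
    intro x hx
    have hx0 : 0 < x := hx
    have hxc : (x : ℂ) ≠ 0 := by exact_mod_cast hx0.ne'
    have e1 : ((x ^ (2 : ℝ) : ℝ) : ℂ) ^ (ν + s + 1 - 1) = (x : ℂ) ^ (2 * ν + 2 * s) := by
      rw [Real.rpow_two, sq]
      push_cast
      rw [Complex.mul_cpow_ofReal_nonneg hx0.le hx0.le, ← Complex.cpow_add _ _ hxc]
      ring_nf
    rw [e1, Complex.real_smul, Real.rpow_two, show (2 : ℝ) - 1 = 1 by norm_num, Real.rpow_one]
    push_cast
    rw [show 2 * ν + 1 + 2 * (s : ℂ) = (2 * ν + 2 * s) + 1 by ring,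
      Complex.cpow_add (2 * ν + 2 * (s : ℂ)) 1 hxc, Complex.cpow_one]
    ring_nf
  rw [setIntegral_congr_fun measurableSet_Ioi h2, integral_const_mul] at h1
  push_cast at h1 ⊢
  linear_combination (1 / 2) * h1

/-- The Hankel transform of a Gaussian, computed term by term from the Bessel series. -/
lemma hankelGauss_transform {ν : ℂ} (hν : -(1 / 2 : ℝ) ≤ ν.re) {a y : ℝ} (ha : 0 < a)
    (hy : 0 < y) :
    ∫ x in Set.Ioi (0 : ℝ), hankelGauss ν a x * hankelKer ν (x * y) =
      ((1 / (2 * a) : ℝ) : ℂ) ^ (ν + 1) * hankelGauss ν (1 / (4 * a)) y := by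
  set K : ℂ := ((1 / 2 : ℝ) : ℂ) ^ ν * (y : ℂ) ^ (ν + 1 / 2) with hK
  set F : ℕ → ℝ → ℂ := fun s x => (K * besselCoeff ν s * ((y : ℂ) ^ 2 / 4) ^ s) *
    ((x : ℂ) ^ (2 * ν + 1 + 2 * s) * ((Real.exp (-a * x ^ 2) : ℝ) : ℂ)) with hF
  have hterm : ∀ x ∈ Set.Ioi (0 : ℝ),
      hankelGauss ν a x * hankelKer ν (x * y) = ∑' s, F s x := by
    intro x hx
    have hx0 : 0 < x := hx
    have hxc : (x : ℂ) ≠ 0 := by exact_mod_cast hx0.ne'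
    rw [hankelKer_of_pos ν (mul_pos hx0 hy), hankelGauss, besselLam, ← tsum_mul_left,
      ← tsum_mul_left]
    refine tsum_congr fun s => ?_
    simp only [hF, hK]
    rw [show 2 * ν + 1 + 2 * (s : ℂ) = (ν + 1 / 2) + (ν + 1 / 2) + (2 * s : ℕ) by push_cast; ring,
      Complex.cpow_add (ν + 1 / 2 + (ν + 1 / 2)) _ hxc, Complex.cpow_add (ν + 1 / 2) _ hxc,
      Complex.cpow_natCast]
    push_cast
    have := Complex.mul_cpow_ofReal_nonneg hx0.le hy.le (ν + 1 / 2)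
    rw [this, pow_mul]
    have e : ((x : ℂ) * y) ^ 2 / 4 = x ^ 2 * (y ^ 2 / 4) := by ring
    rw [e, mul_pow]
    ring
  have hnorm : ∀ s : ℕ, ∀ x ∈ Set.Ioi (0 : ℝ), ‖F s x‖ =
      (‖K‖ * ‖besselCoeff ν s‖ * (y ^ 2 / 4) ^ s) *
        (x ^ (2 * ν.re + 1 + 2 * s) * Real.exp (-a * x ^ 2)) := by
    intro s x hx
    have hx0 : 0 < x := hx
    simp only [hF]
    rw [norm_mul (K * besselCoeff ν s * _), norm_mul (K * besselCoeff ν s), norm_mul K,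
      norm_mul ((x : ℂ) ^ _), Complex.norm_cpow_eq_rpow_re_of_pos hx0,
      Complex.norm_real, Real.norm_eq_abs, abs_of_pos (Real.exp_pos _), norm_pow]
    have e1 : ‖(y : ℂ) ^ 2 / 4‖ = y ^ 2 / 4 := by simp
    have e2 : (2 * ν + 1 + 2 * (s : ℂ)).re = 2 * ν.re + 1 + 2 * s := by simp
    rw [e1, e2]
  have hq : ∀ s : ℕ, -1 < 2 * ν.re + 1 + 2 * (s : ℝ) := fun s => by
    have hs : (0 : ℝ) ≤ s := Nat.cast_nonneg s
    linarith
  have hFint : ∀ s, Integrable (F s) (volume.restrict (Set.Ioi (0 : ℝ))) := by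
    intro s
    refine Integrable.mono' ((rpow_gauss_integrableOn (hq s) ha).const_mul
      (‖K‖ * ‖besselCoeff ν s‖ * (y ^ 2 / 4) ^ s)) ?_ ?_
    · refine Measurable.aestronglyMeasurable ?_
      exact measurable_const.mul
        ((measurable_ofReal.pow_const _).mul (measurable_ofReal.comp (by fun_prop)))
    · filter_upwards [ae_restrict_mem measurableSet_Ioi] with x hx
      rw [hnorm s x hx]
  have hnormint : ∀ s, ∫ x in Set.Ioi (0 : ℝ), ‖F s x‖ =
      (‖K‖ * ‖besselCoeff ν s‖ * (y ^ 2 / 4) ^ s) *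
        (1 / 2 * ((1 / a) ^ (ν.re + s + 1) * Real.Gamma (ν.re + s + 1))) := by
    intro s
    rw [setIntegral_congr_fun measurableSet_Ioi (hnorm s), integral_const_mul]
    congr 1
    have := _root_.integral_rpow_mul_exp_neg_mul_rpow (p := 2) two_pos (hq s) ha
    simp only [Real.rpow_two] at this
    rw [this, show (2 * ν.re + 1 + 2 * (s : ℝ) + 1) / 2 = ν.re + s + 1 by ring,
      show -(2 * ν.re + 1 + 2 * (s : ℝ) + 1) / 2 = -(ν.re + s + 1) by ring, Real.rpow_neg ha.le,
      one_div a, Real.inv_rpow ha.le]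
    ring
  have hsum : Summable fun s => ∫ x in Set.Ioi (0 : ℝ), ‖F s x‖ := by
    have hG0 : 0 < ‖Complex.Gamma (ν + 1)‖ := by
      have := gamma_shift_ne_zero hν 0
      simpa using this
    refine Summable.of_nonneg_of_le (fun s => integral_nonneg fun x => norm_nonneg _) (fun s => ?_)
      ((Real.summable_pow_div_factorial (y ^ 2 / 4 / a)).mul_left
        (‖K‖ * (1 / 2) * (1 / a) ^ (ν.re + 1) *
          (Real.Gamma (ν.re + 1) / ‖Complex.Gamma (ν + 1)‖)))
    rw [hnormint s]
    have h1 : 0 < ‖Complex.Gamma (ν + s + 1)‖ := norm_pos_iff.2 (gamma_shift_ne_zero hν s)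
    have h2 := gamma_lower_bound hν s
    have h3 : ‖besselCoeff ν s‖ * Real.Gamma (ν.re + s + 1) ≤
        (Real.Gamma (ν.re + 1) / ‖Complex.Gamma (ν + 1)‖) / s.factorial := by
      simp only [besselCoeff, norm_div, norm_mul, norm_pow, norm_neg, norm_one, one_pow,
        Complex.norm_natCast]
      have hf : (0 : ℝ) < s.factorial := by positivity
      rw [div_div, div_mul_eq_mul_div, one_mul, div_le_div_iff₀ (by positivity) (by positivity)]
      nlinarith
    have h4 : (1 / a) ^ (ν.re + s + 1) = (1 / a) ^ (ν.re + 1) * (1 / a) ^ s := by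
      rw [show ν.re + s + 1 = (ν.re + 1) + s by ring,
        Real.rpow_add (by positivity), Real.rpow_natCast]
    rw [h4]
    calc _ = (‖K‖ * (y ^ 2 / 4) ^ s * (1 / 2) * ((1 / a) ^ (ν.re + 1) * (1 / a) ^ s)) *
          (‖besselCoeff ν s‖ * Real.Gamma (ν.re + s + 1)) := by ring
      _ ≤ (‖K‖ * (y ^ 2 / 4) ^ s * (1 / 2) * ((1 / a) ^ (ν.re + 1) * (1 / a) ^ s)) *
          ((Real.Gamma (ν.re + 1) / ‖Complex.Gamma (ν + 1)‖) / s.factorial) := by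
        gcongr
      _ = _ := by
        have : (y ^ 2 / 4 / a) ^ s = (y ^ 2 / 4) ^ s * (1 / a) ^ s := by
          rw [← mul_pow]
          ring_nf
        rw [this]
        ring
  have hmain := hasSum_integral_of_summable_integral_norm hFint hsum
  rw [← setIntegral_congr_fun measurableSet_Ioi hterm] at hmain
  refine hmain.unique ?_
  have hac : ((1 / a : ℝ) : ℂ) ≠ 0 := by exact_mod_cast (one_div_pos.2 ha).ne'
  have hval : ∀ s : ℕ, ∫ x in Set.Ioi (0 : ℝ), F s x =
      (K * (1 / 2) * ((1 / a : ℝ) : ℂ) ^ (ν + 1)) *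
        ((-(y ^ 2 / (4 * a)) : ℂ) ^ s / s.factorial) := by
    intro s
    simp only [hF]
    rw [integral_const_mul, gauss_moment hν ha s, besselCoeff,
      show ν + (s : ℂ) + 1 = (ν + 1) + s by ring, Complex.cpow_add _ _ hac, Complex.cpow_natCast]
    have hG := gamma_shift_ne_zero hν s
    rw [show ν + (s : ℂ) + 1 = (ν + 1) + s by ring] at hG
    have hf : (s.factorial : ℂ) ≠ 0 := by exact_mod_cast s.factorial_ne_zero
    have e : (-(y ^ 2 / (4 * a)) : ℂ) ^ s =
        (-1) ^ s * ((y : ℂ) ^ 2 / 4) ^ s * ((1 / a : ℝ) : ℂ) ^ s := by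
      rw [← mul_pow, ← mul_pow]
      congr 1
      push_cast
      have : (a : ℂ) ≠ 0 := by exact_mod_cast ha.ne'
      field_simp
    rw [e]
    field_simp
  have hexp := (NormedSpace.expSeries_div_hasSum_exp (-(y ^ 2 / (4 * a)) : ℂ)).mul_left
    (K * (1 / 2) * ((1 / a : ℝ) : ℂ) ^ (ν + 1))
  rw [← Complex.exp_eq_exp_ℂ] at hexp
  have hfin : K * (1 / 2) * ((1 / a : ℝ) : ℂ) ^ (ν + 1) * cexp (-(y ^ 2 / (4 * a)) : ℂ) =
      ((1 / (2 * a) : ℝ) : ℂ) ^ (ν + 1) * hankelGauss ν (1 / (4 * a)) y := by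
    have e1 : ((1 / (2 * a) : ℝ) : ℂ) ^ (ν + 1) =
        ((1 / 2 : ℝ) : ℂ) ^ ν * (1 / 2) * ((1 / a : ℝ) : ℂ) ^ (ν + 1) := by
      rw [← half_cpow_succ, ← Complex.mul_cpow_ofReal_nonneg (by norm_num) (by positivity)]
      congr 1
      push_cast
      field_simp
    rw [e1, hankelGauss, hK]
    push_cast
    rw [show (-(y ^ 2 / (4 * a)) : ℂ) = -(1 / (4 * a)) * y ^ 2 by ring]
    ring
  rw [← hfin]
  rw [funext hval]
  exact hexp

/-! ### The `n`-dimensional transform -/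

/-- Lebesgue measure on the orthant `(0,∞)ⁿ`, as a product measure. -/
noncomputable abbrev orthMeas (n : ℕ) : Measure (Fin n → ℝ) :=
  Measure.pi fun _ : Fin n => (volume : Measure ℝ).restrict (Set.Ioi 0)

/-- The product kernel `∏ₖ √(xₖyₖ) J_ν(xₖyₖ)`. -/
noncomputable def prodKer {n : ℕ} (ν : ℂ) (x y : Fin n → ℝ) : ℂ := ∏ k, hankelKer ν (x k * y k)

/-- The `n`-dimensional Hankel transform of order `ν`. -/
noncomputable def hankelT {n : ℕ} (ν : ℂ) (f : (Fin n → ℝ) → ℂ) (y : Fin n → ℝ) : ℂ :=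
  ∫ x, f x * prodKer ν x y ∂(orthMeas n)

lemma posOrthant_eq_pi (n : ℕ) : posOrthant n = Set.univ.pi fun _ => Set.Ioi (0 : ℝ) := by
  ext x
  simp [posOrthant]

lemma restrict_posOrthant (n : ℕ) : volume.restrict (posOrthant n) = orthMeas n := by
  rw [posOrthant_eq_pi, volume_pi, Measure.restrict_pi_pi]

lemma isOpen_posOrthant (n : ℕ) : IsOpen (posOrthant n) := by
  rw [posOrthant_eq_pi]
  exact isOpen_set_pi Set.finite_univ fun _ _ => isOpen_Ioi

lemma ae_mem_posOrthant (n : ℕ) : ∀ᵐ x ∂(orthMeas n), x ∈ posOrthant n := by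
  rw [← restrict_posOrthant]
  exact ae_restrict_mem (isOpen_posOrthant n).measurableSet

lemma aestronglyMeasurable_of_continuousOn {n : ℕ} {f : (Fin n → ℝ) → ℂ}
    (hf : ContinuousOn f (posOrthant n)) : AEStronglyMeasurable f (orthMeas n) := by
  rw [← restrict_posOrthant]
  exact hf.aestronglyMeasurable (isOpen_posOrthant n).measurableSet

lemma prodKer_comm {n : ℕ} (ν : ℂ) (x y : Fin n → ℝ) : prodKer ν x y = prodKer ν y x :=
  Finset.prod_congr rfl fun k _ => by rw [mul_comm]

lemma prodKer_bounded {ν : ℂ} (hν : -(1 / 2 : ℝ) ≤ ν.re) (n : ℕ) :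
    ∃ C : ℝ, 0 ≤ C ∧ ∀ x y : Fin n → ℝ, ‖prodKer ν x y‖ ≤ C := by
  obtain ⟨C, hC0, hC⟩ := hankelKer_bounded hν
  refine ⟨C ^ n, by positivity, fun x y => ?_⟩
  rw [prodKer, norm_prod]
  calc _ ≤ ∏ _k : Fin n, C := Finset.prod_le_prod (fun _ _ => norm_nonneg _) fun k _ => hC _
    _ = _ := by simp

lemma prodKer_measurable {ν : ℂ} (hν : -(1 / 2 : ℝ) ≤ ν.re) (n : ℕ) :
    Measurable fun p : (Fin n → ℝ) × (Fin n → ℝ) => prodKer ν p.1 p.2 := by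
  unfold prodKer
  refine Finset.measurable_prod _ fun k _ => (hankelKer_measurable hν).comp ?_
  fun_prop

lemma prodKer_continuousOn {ν : ℂ} (hν : -(1 / 2 : ℝ) ≤ ν.re) {n : ℕ} {x : Fin n → ℝ}
    (hx : x ∈ posOrthant n) : ContinuousOn (fun y => prodKer ν x y) (posOrthant n) := by
  unfold prodKer
  refine continuousOn_finsetProd _ fun k _ => ?_
  refine (hankelKer_continuousOn hν).comp (by fun_prop) fun y hy => mul_pos (hx k) (hy k)

lemma integrable_mul_prodKer {ν : ℂ} (hν : -(1 / 2 : ℝ) ≤ ν.re) {n : ℕ}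
    {f : (Fin n → ℝ) → ℂ} (hf : Integrable f (orthMeas n)) (y : Fin n → ℝ) :
    Integrable (fun x => f x * prodKer ν x y) (orthMeas n) := by
  obtain ⟨C, -, hC⟩ := prodKer_bounded hν n
  refine hf.mul_bdd (c := C) ?_ (Filter.Eventually.of_forall fun x => hC x y)
  exact ((prodKer_measurable hν n).comp (measurable_id.prodMk measurable_const)).aestronglyMeasurable

lemma hankelT_continuousOn {ν : ℂ} (hν : -(1 / 2 : ℝ) ≤ ν.re) {n : ℕ}
    {f : (Fin n → ℝ) → ℂ} (hf : Integrable f (orthMeas n)) :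
    ContinuousOn (hankelT ν f) (posOrthant n) := by
  obtain ⟨C, hC0, hC⟩ := prodKer_bounded hν n
  refine continuousOn_of_dominated (bound := fun x => ‖f x‖ * C) ?_ ?_ (hf.norm.mul_const C) ?_
  · exact fun y _ => (integrable_mul_prodKer hν hf y).aestronglyMeasurable
  · refine fun y _ => Filter.Eventually.of_forall fun x => ?_
    rw [norm_mul]
    gcongr
    exact hC x y
  · filter_upwards [ae_mem_posOrthant n] with x hx
    exact continuousOn_const.mul (prodKer_continuousOn hν hx)

lemma hankelT_bounded {ν : ℂ} (hν : -(1 / 2 : ℝ) ≤ ν.re) {n : ℕ}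
    {f : (Fin n → ℝ) → ℂ} (hf : Integrable f (orthMeas n)) :
    ∃ C : ℝ, 0 ≤ C ∧ ∀ y, ‖hankelT ν f y‖ ≤ C := by
  obtain ⟨C, hC0, hC⟩ := prodKer_bounded hν n
  refine ⟨∫ x, ‖f x‖ * C ∂(orthMeas n), integral_nonneg fun x => by positivity, fun y => ?_⟩
  refine norm_integral_le_of_norm_le (hf.norm.mul_const C) (Filter.Eventually.of_forall fun x => ?_)
  rw [norm_mul]
  gcongr
  exact hC x y

/-- The Hankel transform is symmetric for the bilinear pairing `∫ f g`. -/
lemma hankelT_duality {ν : ℂ} (hν : -(1 / 2 : ℝ) ≤ ν.re) {n : ℕ}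
    {f g : (Fin n → ℝ) → ℂ} (hf : Integrable f (orthMeas n)) (hg : Integrable g (orthMeas n)) :
    ∫ y, hankelT ν f y * g y ∂(orthMeas n) = ∫ x, f x * hankelT ν g x ∂(orthMeas n) := by
  obtain ⟨C, hC0, hC⟩ := prodKer_bounded hν n
  have hint : Integrable (Function.uncurry fun y x : Fin n → ℝ => f x * prodKer ν x y * g y)
      ((orthMeas n).prod (orthMeas n)) := by
    have h1 : Integrable (fun p : (Fin n → ℝ) × (Fin n → ℝ) => g p.1 * f p.2)
        ((orthMeas n).prod (orthMeas n)) := hg.mul_prod hf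
    have h2 := h1.mul_bdd (c := C)
      (prodKer_measurable hν n).aestronglyMeasurable (Filter.Eventually.of_forall fun p => hC p.1 p.2)
    refine h2.congr (Filter.Eventually.of_forall fun p => ?_)
    simp only [Function.uncurry]
    rw [prodKer_comm ν p.1 p.2]
    ring
  have h := integral_integral_swap hint
  calc _ = ∫ y, ∫ x, f x * prodKer ν x y * g y ∂(orthMeas n) ∂(orthMeas n) := by
        refine integral_congr_ae (Filter.Eventually.of_forall fun y => ?_)
        simp only [hankelT]
        rw [← integral_mul_const]
    _ = _ := h
    _ = _ := by
        refine integral_congr_ae (Filter.Eventually.of_forall fun x => ?_)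
        simp only [hankelT]
        rw [← integral_const_mul]
        refine integral_congr_ae (Filter.Eventually.of_forall fun y => ?_)
        simp only
        rw [prodKer_comm ν x y]
        ring

/-- A product of one-dimensional Gaussians with parameters `aₖ`. -/
noncomputable def prodGauss {n : ℕ} (ν : ℂ) (a x : Fin n → ℝ) : ℂ :=
  ∏ k, hankelGauss ν (a k) (x k)

lemma prodGauss_integrable {ν : ℂ} (hν : -(1 / 2 : ℝ) ≤ ν.re) {n : ℕ} {a : Fin n → ℝ}
    (ha : ∀ k, 0 < a k) : Integrable (prodGauss ν a) (orthMeas n) :=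
  Integrable.fintype_prod fun k => hankelGauss_integrableOn hν (ha k)

lemma hankelT_prodGauss {ν : ℂ} (hν : -(1 / 2 : ℝ) ≤ ν.re) {n : ℕ} {a : Fin n → ℝ}
    (ha : ∀ k, 0 < a k) {y : Fin n → ℝ} (hy : y ∈ posOrthant n) :
    hankelT ν (prodGauss ν a) y = (∏ k, ((1 / (2 * a k) : ℝ) : ℂ) ^ (ν + 1)) *
      prodGauss ν (fun k => 1 / (4 * a k)) y := by
  simp only [hankelT, prodGauss, prodKer, ← Finset.prod_mul_distrib]
  rw [integral_fintype_prod_eq_prod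
    (f := fun k t => hankelGauss ν (a k) t * hankelKer ν (t * y k))]
  exact Finset.prod_congr rfl fun k _ => hankelGauss_transform hν (ha k) (hy k)

lemma hankelT_const_mul_congr {ν : ℂ} {n : ℕ} {f g : (Fin n → ℝ) → ℂ} {c : ℂ}
    (h : ∀ x ∈ posOrthant n, f x = c * g x) (y : Fin n → ℝ) :
    hankelT ν f y = c * hankelT ν g y := by
  simp only [hankelT]
  rw [← integral_const_mul]
  refine integral_congr_ae ?_
  filter_upwards [ae_mem_posOrthant n] with x hx
  rw [h x hx]
  ring

lemma hankelT_hankelT_prodGauss {ν : ℂ} (hν : -(1 / 2 : ℝ) ≤ ν.re) {n : ℕ} {a : Fin n → ℝ}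
    (ha : ∀ k, 0 < a k) {y : Fin n → ℝ} (hy : y ∈ posOrthant n) :
    hankelT ν (hankelT ν (prodGauss ν a)) y = prodGauss ν a y := by
  have ha' : ∀ k, 0 < 1 / (4 * a k) := fun k => by have := ha k; positivity
  rw [hankelT_const_mul_congr (fun x hx => hankelT_prodGauss hν ha hx),
    hankelT_prodGauss hν ha' hy, ← mul_assoc, ← Finset.prod_mul_distrib]
  have h1 : ∀ k ∈ Finset.univ, ((1 / (2 * a k) : ℝ) : ℂ) ^ (ν + 1) *
      ((1 / (2 * (1 / (4 * a k))) : ℝ) : ℂ) ^ (ν + 1) = 1 := by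
    intro k _
    have hk := ha k
    rw [← Complex.mul_cpow_ofReal_nonneg (by positivity) (by positivity), ← ofReal_mul]
    have : 1 / (2 * a k) * (1 / (2 * (1 / (4 * a k)))) = 1 := by
      field_simp
      norm_num
    rw [this, ofReal_one, Complex.one_cpow]
  have h2 : (fun k => 1 / (4 * (1 / (4 * a k)))) = a := by
    funext k
    have hk := ha k
    field_simp
  rw [Finset.prod_eq_one h1, one_mul, h2]

/-- Twice applying the symmetry of the transform, the double transform of `f` has the same
Gaussian moments as `f`. -/
lemma hankelT_hankelT_moments {ν : ℂ} (hν : -(1 / 2 : ℝ) ≤ ν.re) {n : ℕ} {f : (Fin n → ℝ) → ℂ}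
    (hf : Integrable f (orthMeas n)) (hTf : Integrable (hankelT ν f) (orthMeas n))
    {a : Fin n → ℝ} (ha : ∀ k, 0 < a k) :
    ∫ x, hankelT ν (hankelT ν f) x * prodGauss ν a x ∂(orthMeas n) =
      ∫ x, f x * prodGauss ν a x ∂(orthMeas n) := by
  have ha' : ∀ k, 0 < 1 / (4 * a k) := fun k => by have := ha k; positivity
  have hG : Integrable (hankelT ν (prodGauss ν a)) (orthMeas n) := by
    refine ((prodGauss_integrable hν ha').const_mul
      (∏ k, ((1 / (2 * a k) : ℝ) : ℂ) ^ (ν + 1))).congr ?_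
    filter_upwards [ae_mem_posOrthant n] with x hx
    exact (hankelT_prodGauss hν ha hx).symm
  rw [hankelT_duality hν hTf (prodGauss_integrable hν ha), hankelT_duality hν hf hG]
  refine integral_congr_ae ?_
  filter_upwards [ae_mem_posOrthant n] with x hx
  rw [hankelT_hankelT_prodGauss hν ha hx]

/-! ### Uniqueness from Gaussian moments -/

/-- The map `x ↦ (e^{-x₁²}, …, e^{-xₙ²})` from `ℝⁿ` to the cube, injective on the orthant. -/
noncomputable def expSq (n : ℕ) (x : Fin n → ℝ) : Fin n → unitInterval := fun k =>
  ⟨Real.exp (-(x k) ^ 2), (Real.exp_pos _).le, Real.exp_le_one_iff.2 (by nlinarith [sq_nonneg (x k)])⟩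

lemma expSq_continuous (n : ℕ) : Continuous (expSq n) :=
  continuous_pi fun k => Continuous.subtype_mk (by fun_prop) _

/-- The coordinate functions on the cube. -/
noncomputable def cubeCoord (n : ℕ) (k : Fin n) : C(Fin n → unitInterval, ℝ) :=
  ⟨fun t => (t k : ℝ), by fun_prop⟩

lemma closure_cubeCoord {n : ℕ} {f : C(Fin n → unitInterval, ℝ)}
    (hf : f ∈ Submonoid.closure (Set.range (cubeCoord n))) :
    ∃ m : Fin n → ℕ, ∀ t, f t = ∏ k, (t k : ℝ) ^ m k := by
  classical
  induction hf using Submonoid.closure_induction with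
  | mem f hf =>
    obtain ⟨j, rfl⟩ := hf
    refine ⟨Pi.single j 1, fun t => ?_⟩
    rw [Finset.prod_eq_single j]
    · simp [cubeCoord]
    · intro k _ hk
      simp [hk]
    · simp
  | one => exact ⟨0, fun t => by simp⟩
  | mul f g _ _ hf hg =>
    obtain ⟨m, hm⟩ := hf
    obtain ⟨l, hl⟩ := hg
    refine ⟨m + l, fun t => ?_⟩
    rw [ContinuousMap.mul_apply, hm, hl, ← Finset.prod_mul_distrib]
    simp [pow_add]

lemma hankelGauss_mul_exp (ν : ℂ) (a x : ℝ) (m : ℕ) :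
    hankelGauss ν a x * ((Real.exp (-x ^ 2) ^ m : ℝ) : ℂ) = hankelGauss ν (a + m) x := by
  rw [hankelGauss, hankelGauss, mul_assoc, ← ofReal_mul, ← Real.exp_nat_mul, ← Real.exp_add]
  ring_nf

/-- Vanishing Gaussian moments propagate from monomials in `e^{-xₖ²}` to polynomials by linearity, and
to all continuous functions of `(e^{-x₁²}, …, e^{-xₙ²})` on the cube by Stone–Weierstrass. -/
lemma integral_mul_comp_expSq_eq_zero {ν : ℂ} {n : ℕ} {D : (Fin n → ℝ) → ℂ}
    (hint : Integrable (fun x => D x * prodGauss ν 1 x) (orthMeas n))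
    (hm : ∀ a : Fin n → ℝ, (∀ k, 0 < a k) → ∫ x, D x * prodGauss ν a x ∂(orthMeas n) = 0)
    (f : C(Fin n → unitInterval, ℝ)) :
    ∫ x, (D x * prodGauss ν 1 x) * (f (expSq n x) : ℂ) ∂(orthMeas n) = 0 := by
  set ψ : (Fin n → ℝ) → ℂ := fun x => D x * prodGauss ν 1 x with hψ
  have hI : ∀ g : C(Fin n → unitInterval, ℝ),
      Integrable (fun x => ψ x * (g (expSq n x) : ℂ)) (orthMeas n) := by
    intro g
    refine hint.mul_bdd (c := ‖g‖) ?_ (Filter.Eventually.of_forall fun x => ?_)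
    · exact (continuous_ofReal.comp (g.continuous.comp (expSq_continuous n))).aestronglyMeasurable
    · rw [Complex.norm_real]
      exact g.norm_coe_le_norm _
  set A : Subalgebra ℝ C(Fin n → unitInterval, ℝ) := Algebra.adjoin ℝ (Set.range (cubeCoord n))
    with hA
  have hAzero : ∀ g ∈ A, ∫ x, ψ x * (g (expSq n x) : ℂ) ∂(orthMeas n) = 0 := by
    intro g hg
    have hg' : g ∈ Submodule.span ℝ
        (Submonoid.closure (Set.range (cubeCoord n)) : Set C(Fin n → unitInterval, ℝ)) := by
      rw [← Algebra.adjoin_eq_span]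
      exact hg
    clear hg
    induction hg' using Submodule.span_induction with
    | mem g hg =>
      obtain ⟨m, hmm⟩ := closure_cubeCoord hg
      rw [← hm (fun k => 1 + m k) (fun k => by positivity)]
      refine integral_congr_ae (Filter.Eventually.of_forall fun x => ?_)
      simp only [hψ]
      rw [hmm, mul_assoc, prodGauss, prodGauss, ofReal_prod, ← Finset.prod_mul_distrib]
      congr 1
      exact Finset.prod_congr rfl fun k _ => hankelGauss_mul_exp ν 1 (x k) (m k)
    | zero => simp
    | add g h _ _ hg hh =>
      have : ∀ x, ψ x * (((g + h) (expSq n x) : ℝ) : ℂ) =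
          ψ x * (g (expSq n x) : ℂ) + ψ x * (h (expSq n x) : ℂ) := fun x => by
        rw [ContinuousMap.add_apply]
        push_cast
        ring
      simp only [this]
      rw [integral_add (hI g) (hI h), hg,
        hh, add_zero]
    | smul c g _ hg =>
      have : ∀ x, ψ x * (((c • g) (expSq n x) : ℝ) : ℂ) = c * (ψ x * (g (expSq n x) : ℂ)) := fun x => by
        rw [ContinuousMap.smul_apply, smul_eq_mul]
        push_cast
        ring
      simp only [this]
      rw [integral_const_mul, hg, mul_zero]
  have hsep : A.SeparatesPoints := by
    intro s t hst
    obtain ⟨k, hk⟩ := Function.ne_iff.1 hst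
    refine ⟨cubeCoord n k, ⟨cubeCoord n k, Algebra.subset_adjoin ⟨k, rfl⟩, rfl⟩, ?_⟩
    exact fun h => hk (Subtype.ext h)
  by_contra hne
  set J := ∫ x, ψ x * (f (expSq n x) : ℂ) ∂(orthMeas n) with hJ
  have hJpos : 0 < ‖J‖ := norm_pos_iff.2 hne
  set B := ∫ x, ‖ψ x‖ ∂(orthMeas n) with hB
  have hB0 : 0 ≤ B := integral_nonneg fun x => norm_nonneg _
  obtain ⟨⟨g, hgA⟩, hg⟩ := ContinuousMap.exists_mem_subalgebra_near_continuousMap_of_separatesPoints A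
    hsep f (‖J‖ / (B + 1)) (by positivity)
  have h1 : J = ∫ x, ψ x * ((f - g) (expSq n x) : ℂ) ∂(orthMeas n) := by
    have : ∀ x, ψ x * (((f - g) (expSq n x) : ℝ) : ℂ) =
        ψ x * (f (expSq n x) : ℂ) - ψ x * (g (expSq n x) : ℂ) := fun x => by
      rw [ContinuousMap.sub_apply]
      push_cast
      ring
    simp only [this]
    rw [integral_sub (hI f) (hI g), hAzero g hgA, sub_zero]
  have h2 : ‖J‖ ≤ B * ‖f - g‖ := by
    rw [h1, hB, ← integral_mul_const]
    refine norm_integral_le_of_norm_le (hint.norm.mul_const _)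
      (Filter.Eventually.of_forall fun x => ?_)
    rw [norm_mul, Complex.norm_real]
    gcongr
    exact (f - g).norm_coe_le_norm _
  rw [norm_sub_rev] at hg
  have h3 : ‖f - g‖ * (B + 1) < ‖J‖ := (lt_div_iff₀ (by positivity)).1 hg
  nlinarith [norm_nonneg (f - g)]

lemma prodGauss_continuousOn (ν : ℂ) {n : ℕ} (a : Fin n → ℝ) :
    ContinuousOn (prodGauss ν a) (posOrthant n) := by
  unfold prodGauss
  refine continuousOn_finsetProd _ fun k _ => ?_
  have h : ContinuousOn (hankelGauss ν (a k)) (Set.Ioi 0) := by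
    intro t ht
    unfold hankelGauss
    refine ContinuousAt.continuousWithinAt ?_
    exact (hasDerivAt_ofReal_cpow _ ht).continuousAt.mul (by fun_prop)
  exact h.comp (by fun_prop) fun x hx => hx k

lemma prodGauss_ne_zero (ν : ℂ) {n : ℕ} (a : Fin n → ℝ) {x : Fin n → ℝ} (hx : x ∈ posOrthant n) :
    prodGauss ν a x ≠ 0 := by
  refine Finset.prod_ne_zero_iff.2 fun k _ => mul_ne_zero ?_ ?_
  · have : (x k : ℂ) ≠ 0 := by exact_mod_cast (hx k).ne'
    simp [Complex.cpow_eq_zero_iff, this]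
  · exact_mod_cast (Real.exp_pos _).ne'

/-- A bounded continuous function on the orthant all of whose Gaussian moments vanish is zero:
in the variables `e^{-xₖ²}` the moments are those against polynomials on the cube, which are dense
in the continuous functions, and testing against a tent at a point recovers the value there. -/
lemma eq_zero_of_gauss_moments {ν : ℂ} (hν : -(1 / 2 : ℝ) ≤ ν.re) {n : ℕ} {D : (Fin n → ℝ) → ℂ}
    (hD : ContinuousOn D (posOrthant n)) {C : ℝ} (hb : ∀ x ∈ posOrthant n, ‖D x‖ ≤ C)
    (hm : ∀ a : Fin n → ℝ, (∀ k, 0 < a k) → ∫ x, D x * prodGauss ν a x ∂(orthMeas n) = 0)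
    {w : Fin n → ℝ} (hw : w ∈ posOrthant n) : D w = 0 := by
  have hint : Integrable (fun x => D x * prodGauss ν 1 x) (orthMeas n) := by
    refine (prodGauss_integrable hν (a := 1) fun _ => one_pos).bdd_mul (c := C)
      (aestronglyMeasurable_of_continuousOn hD) ?_
    filter_upwards [ae_mem_posOrthant n] with x hx using hb x hx
  set ψ : (Fin n → ℝ) → ℂ := fun x => D x * prodGauss ν 1 x with hψ
  have hψc : ContinuousOn ψ (posOrthant n) := hD.mul (prodGauss_continuousOn ν 1)
  by_contra hne
  have hψw : ψ w ≠ 0 := mul_ne_zero hne (prodGauss_ne_zero ν 1 hw)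
  -- `q = Re (conj (ψ w) ψ)` is real and, by continuity, positive near `w`
  set q : (Fin n → ℝ) → ℝ := fun x => ((starRingEnd ℂ) (ψ w) * ψ x).re with hq
  have hqc : ContinuousOn q (posOrthant n) :=
    continuous_re.comp_continuousOn (continuousOn_const.mul hψc)
  have hqw : 0 < q w := by
    simp only [hq]
    rw [mul_comm, Complex.mul_conj, ofReal_re]
    exact Complex.normSq_pos.2 hψw
  have hU : {x | 0 < q x} ∈ nhds w :=
    (hqc.continuousAt ((isOpen_posOrthant n).mem_nhds hw)).eventually (lt_mem_nhds hqw)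
  -- `R` inverts `e` on the orthant and is continuous at `e w`, so `e x` near `e w` forces `x` near `w`
  set e : (Fin n → ℝ) → (Fin n → ℝ) := fun x k => Real.exp (-(x k) ^ 2) with he
  set R : (Fin n → ℝ) → (Fin n → ℝ) := fun t k => Real.sqrt (-Real.log (t k)) with hR
  have hRe : ∀ x ∈ posOrthant n, R (e x) = x := by
    intro x hx
    funext k
    simp only [hR, he, Real.log_exp, neg_neg]
    exact Real.sqrt_sq (hx k).le
  have hRc : ContinuousAt R (e w) := by
    refine continuousAt_pi.2 fun k => ?_
    refine Real.continuous_sqrt.continuousAt.comp ?_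
    have hk : ContinuousAt (fun y : Fin n → ℝ => y k) (e w) := (continuous_apply k).continuousAt
    exact (hk.log (Real.exp_pos (-(w k) ^ 2)).ne').neg
  have hpre : R ⁻¹' {x | 0 < q x} ∈ nhds (e w) := by
    apply hRc
    rw [hRe w hw]
    exact hU
  obtain ⟨δ, hδ, hball⟩ := Metric.mem_nhds_iff.1 hpre
  have hpos : ∀ x ∈ posOrthant n, dist (e x) (e w) < δ → 0 < q x := by
    intro x hx hd
    have := hball (Metric.mem_ball.2 hd)
    simpa [hRe x hx] using this
  -- a tent of radius `δ` at `e w`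
  let f : C(Fin n → unitInterval, ℝ) :=
    ⟨fun t => max 0 (δ - dist (fun k => (t k : ℝ)) (e w)), by fun_prop⟩
  have hf : ∀ x, f (expSq n x) = max 0 (δ - dist (e x) (e w)) := fun x => rfl
  have h0 := integral_mul_comp_expSq_eq_zero hint hm f
  have hIf : Integrable (fun x => ψ x * (f (expSq n x) : ℂ)) (orthMeas n) := by
    refine hint.mul_bdd (c := ‖f‖) ?_ (Filter.Eventually.of_forall fun x => ?_)
    · exact (continuous_ofReal.comp (f.continuous.comp (expSq_continuous n))).aestronglyMeasurable
    · rw [Complex.norm_real]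
      exact f.norm_coe_le_norm _
  have hIq : Integrable (fun x => q x * f (expSq n x)) (orthMeas n) := by
    refine ((hIf.const_mul ((starRingEnd ℂ) (ψ w))).re).congr
      (Filter.Eventually.of_forall fun x => ?_)
    simp only [hq, RCLike.re_eq_complex_re]
    rw [← mul_assoc, Complex.re_mul_ofReal]
  have h1 : ∫ x, q x * f (expSq n x) ∂(orthMeas n) = 0 := by
    have h2 : ∀ x, q x * f (expSq n x) =
        (((starRingEnd ℂ) (ψ w) * (ψ x * (f (expSq n x) : ℂ))).re) := fun x => by
      simp only [hq]
      rw [← mul_assoc ((starRingEnd ℂ) (ψ w)) (ψ x), Complex.re_mul_ofReal]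
    simp only [h2]
    have h3 := integral_re (𝕜 := ℂ) (hIf.const_mul ((starRingEnd ℂ) (ψ w)))
    simp only [RCLike.re_eq_complex_re] at h3
    rw [h3, integral_const_mul, h0]
    simp
  have hnn : 0 ≤ᵐ[orthMeas n] fun x => q x * f (expSq n x) := by
    filter_upwards [ae_mem_posOrthant n] with x hx
    rw [hf]
    rcases lt_or_ge (dist (e x) (e w)) δ with hd | hd
    · exact mul_nonneg (hpos x hx hd).le (le_max_left _ _)
    · rw [max_eq_left (by linarith)]
      simp
  rw [integral_eq_zero_iff_of_nonneg_ae hnn hIq, ← restrict_posOrthant, Filter.EventuallyEq,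
    ae_restrict_iff' (isOpen_posOrthant n).measurableSet] at h1
  have hec : Continuous e := by fun_prop
  have hVo : IsOpen (posOrthant n ∩ {x | dist (e x) (e w) < δ}) :=
    (isOpen_posOrthant n).inter (isOpen_lt (by fun_prop) continuous_const)
  have hVpos := hVo.measure_pos (volume : Measure (Fin n → ℝ))
    ⟨w, hw, by simpa using hδ⟩
  have hVzero : volume (posOrthant n ∩ {x | dist (e x) (e w) < δ}) = 0 := by
    rw [measure_eq_zero_iff_ae_notMem]
    filter_upwards [h1] with x hx hxV
    have h4 := hx hxV.1
    have hd : dist (e x) (e w) < δ := hxV.2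
    rw [hf, max_eq_right (by linarith)] at h4
    have : 0 < q x * (δ - dist (e x) (e w)) := mul_pos (hpos x hxV.1 hd) (by linarith)
    exact this.ne' h4
  exact hVpos.ne' hVzero

/-! ### Integration by parts in one coordinate -/

/-- The weighted kernel `t^{μ+1/2} √(ty) J_μ(ty)`. -/
noncomputable def wKer (μ : ℂ) (t y : ℝ) : ℂ := (t : ℂ) ^ (μ + 1 / 2) * hankelKer μ (t * y)

/-- The integral of `G` against `∏ₖ xₖ^{ν+pₖ+1/2} √(xₖyₖ) J_{ν+pₖ}(xₖyₖ)`. For `p = 0` it is the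
Hankel transform of `∏ₖ xₖ^{ν+1/2} G`. -/
noncomputable def shiftT {n : ℕ} (ν : ℂ) (p : Fin n → ℕ) (G : (Fin n → ℝ) → ℂ) (y : Fin n → ℝ) : ℂ :=
  ∫ x, G x * ∏ k, wKer (ν + p k) (x k) (y k) ∂(orthMeas n)

/-- Smooth bounded functions on the orthant that vanish once some coordinate exceeds `ε`. -/
structure BoxFn (n : ℕ) (ε : ℝ) (G : (Fin n → ℝ) → ℂ) : Prop where
  smooth : ContDiffOn ℝ (⊤ : ℕ∞) G (posOrthant n)
  supp : ∀ x ∈ posOrthant n, (∃ i, ε < x i) → G x = 0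
  bdd : ∃ B : ℝ, ∀ x ∈ posOrthant n, ‖G x‖ ≤ B

lemma re_add_natCast {ν : ℂ} (hν : -(1 / 2 : ℝ) ≤ ν.re) (m : ℕ) : -(1 / 2 : ℝ) ≤ (ν + m).re := by
  have : (0 : ℝ) ≤ m := Nat.cast_nonneg m
  simp only [add_re, natCast_re]
  linarith

lemma norm_wKer_le {μ : ℂ} (hμ : -(1 / 2 : ℝ) ≤ μ.re) (ε : ℝ) :
    ∃ M : ℝ, 0 ≤ M ∧ ∀ t y : ℝ, 0 < t → t ≤ ε → ‖wKer μ t y‖ ≤ M := by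
  obtain ⟨C, hC0, hC⟩ := hankelKer_bounded hμ
  refine ⟨|ε| ^ (μ.re + 1 / 2) * C, by positivity, fun t y ht hte => ?_⟩
  rw [wKer, norm_mul, Complex.norm_cpow_eq_rpow_re_of_pos ht, re_add_half]
  have h1 : t ^ (μ.re + 1 / 2) ≤ |ε| ^ (μ.re + 1 / 2) :=
    Real.rpow_le_rpow ht.le (hte.trans (le_abs_self ε)) (by linarith)
  exact mul_le_mul h1 (hC _) (norm_nonneg _) (by positivity)

lemma wKer_measurable {μ : ℂ} (hμ : -(1 / 2 : ℝ) ≤ μ.re) (y : ℝ) :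
    Measurable fun t => wKer μ t y := by
  unfold wKer
  exact (measurable_ofReal.pow_const _).mul ((hankelKer_measurable hμ).comp (by fun_prop))

lemma integrable_prod_indicator {n : ℕ} (ε : ℝ) (M : Fin n → ℝ) :
    Integrable (fun x : Fin n → ℝ => ∏ k, (Set.Iic ε).indicator (fun _ => M k) (x k))
      (orthMeas n) := by
  refine Integrable.fintype_prod fun k => ?_
  rw [integrable_indicator_iff measurableSet_Iic, IntegrableOn,
    Measure.restrict_restrict measurableSet_Iic, Set.inter_comm, Set.Ioi_inter_Iic]
  exact integrable_const _

/-- A function supported in the box `(0,ε]ⁿ`, times a product of factors bounded on `(0,ε]`, is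
dominated by an integrable function. -/
lemma BoxFn.dominated {n : ℕ} {ε : ℝ} {G : (Fin n → ℝ) → ℂ} (hG : BoxFn n ε G) (M : Fin n → ℝ)
    (hM : ∀ k, 0 ≤ M k) :
    ∃ b : (Fin n → ℝ) → ℝ, Integrable b (orthMeas n) ∧ ∀ F : Fin n → ℝ → ℂ,
      (∀ k t, 0 < t → t ≤ ε → ‖F k t‖ ≤ M k) → ∀ x ∈ posOrthant n,
        ‖G x * ∏ k, F k (x k)‖ ≤ b x := by
  obtain ⟨B, hB⟩ := hG.bdd
  refine ⟨_, (integrable_prod_indicator ε M).const_mul |B|, fun F hF x hx => ?_⟩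
  by_cases h : ∃ i, ε < x i
  · rw [hG.supp x hx h, zero_mul, norm_zero]
    exact mul_nonneg (abs_nonneg _) (Finset.prod_nonneg fun k _ =>
      Set.indicator_nonneg (fun _ _ => hM k) _)
  · push Not at h
    rw [norm_mul, norm_prod]
    refine mul_le_mul ((hB x hx).trans (le_abs_self B)) ?_
      (Finset.prod_nonneg fun _ _ => norm_nonneg _) (abs_nonneg _)
    refine Finset.prod_le_prod (fun _ _ => norm_nonneg _) fun k _ => ?_
    rw [Set.indicator_of_mem (Set.mem_Iic.2 (h k))]
    exact hF k _ (hx k) (h k)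

lemma BoxFn.integrable_shift {n : ℕ} {ε : ℝ} {G : (Fin n → ℝ) → ℂ} (hG : BoxFn n ε G) {ν : ℂ}
    (hν : -(1 / 2 : ℝ) ≤ ν.re) (p : Fin n → ℕ) (y : Fin n → ℝ) :
    Integrable (fun x => G x * ∏ k, wKer (ν + p k) (x k) (y k)) (orthMeas n) := by
  choose M hM0 hM using fun k => norm_wKer_le (re_add_natCast hν (p k)) ε
  obtain ⟨b, hb, h⟩ := hG.dominated M hM0
  refine hb.mono' ?_ ?_
  · refine (aestronglyMeasurable_of_continuousOn hG.smooth.continuousOn).mul ?_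
    refine (Finset.measurable_prod _ fun k _ => ?_).aestronglyMeasurable
    exact (wKer_measurable (re_add_natCast hν (p k)) (y k)).comp (measurable_pi_apply k)
  · filter_upwards [ae_mem_posOrthant n] with x hx
    exact h (fun k t => wKer (ν + p k) t (y k)) (fun k t => hM k t (y k)) x hx

lemma BoxFn.shiftT_bounded {n : ℕ} {ε : ℝ} {G : (Fin n → ℝ) → ℂ} (hG : BoxFn n ε G) {ν : ℂ}
    (hν : -(1 / 2 : ℝ) ≤ ν.re) (p : Fin n → ℕ) :
    ∃ C : ℝ, ∀ y, ‖shiftT ν p G y‖ ≤ C := by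
  choose M hM0 hM using fun k => norm_wKer_le (re_add_natCast hν (p k)) ε
  obtain ⟨b, hb, h⟩ := hG.dominated M hM0
  refine ⟨∫ x, b x ∂(orthMeas n), fun y => norm_integral_le_of_norm_le hb ?_⟩
  filter_upwards [ae_mem_posOrthant n] with x hx
  exact h (fun k t => wKer (ν + p k) t (y k)) (fun k t => hM k t (y k)) x hx

/-- The boundary term at `0`. Boundedness of `h_{μ+1}` is not enough when `Re μ = -1/2`, so the order of
vanishing `t^{2μ+2}` of the whole expression is used. -/
lemma tendsto_hankelKer_succ {μ : ℂ} (hμ : -(1 / 2 : ℝ) ≤ μ.re) {y : ℝ} (hy : 0 < y) :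
    Filter.Tendsto (fun t : ℝ => (t : ℂ) ^ (μ + 1 / 2) * hankelKer (μ + 1) (t * y))
      (nhdsWithin 0 (Set.Ioi 0)) (nhds 0) := by
  have hlam : Continuous fun t : ℝ => besselLam (μ + 1) (((t * y : ℝ) : ℂ) ^ 2 / 4) :=
    (besselLam_continuous (re_succ hμ)).comp (by fun_prop)
  have hre : 0 < (2 * μ + 2).re := by
    simp
    linarith
  have hpow : Continuous fun t : ℝ => (t : ℂ) ^ (2 * μ + 2) :=
    Complex.continuous_ofReal_cpow_const hre
  have hne : 2 * μ + 2 ≠ 0 := fun h => by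
    rw [h] at hre
    exact lt_irrefl _ hre
  have h1 : Filter.Tendsto (fun t : ℝ => ((1 / 2 : ℝ) : ℂ) ^ (μ + 1) * (y : ℂ) ^ (μ + 1 + 1 / 2) *
      ((t : ℂ) ^ (2 * μ + 2) * besselLam (μ + 1) (((t * y : ℝ) : ℂ) ^ 2 / 4)))
      (nhdsWithin 0 (Set.Ioi 0)) (nhds 0) := by
    have h : Filter.Tendsto (fun t : ℝ => (t : ℂ) ^ (2 * μ + 2) *
        besselLam (μ + 1) (((t * y : ℝ) : ℂ) ^ 2 / 4)) (nhds 0) (nhds 0) :=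
      (hpow.mul hlam).tendsto' 0 0 (by
        rw [Pi.mul_apply, ofReal_zero, Complex.zero_cpow hne, zero_mul])
    have h' := (h.mono_left (nhdsWithin_le_nhds (s := Set.Ioi 0))).const_mul
      (((1 / 2 : ℝ) : ℂ) ^ (μ + 1) * (y : ℂ) ^ (μ + 1 + 1 / 2))
    rwa [mul_zero] at h'
  refine h1.congr' ?_
  filter_upwards [self_mem_nhdsWithin] with t ht
  have ht' : (0 : ℝ) < t := ht
  have htc : (t : ℂ) ≠ 0 := by exact_mod_cast ht'.ne'
  rw [hankelKer_of_pos _ (mul_pos ht' hy), show ((t * y : ℝ) : ℂ) ^ (μ + 1 + 1 / 2) =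
      (t : ℂ) ^ (μ + 1 + 1 / 2) * (y : ℂ) ^ (μ + 1 + 1 / 2) by
    rw [ofReal_mul, Complex.mul_cpow_ofReal_nonneg ht'.le hy.le],
    show 2 * μ + 2 = (μ + 1 / 2) + (μ + 1 + 1 / 2) by ring, Complex.cpow_add _ _ htc]
  ring

/-- One integration by parts on the half-line against the kernel: the operator `t⁻¹ d/dt` falls on
`u` and the order of the kernel goes up by one. -/
lemma integral_wKer_by_parts {μ : ℂ} (hμ : -(1 / 2 : ℝ) ≤ μ.re) {y ε : ℝ} (hy : 0 < y)
    {u w : ℝ → ℂ} (hu : ∀ t, 0 < t → HasDerivAt u (t * w t) t)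
    (hb : ∃ B : ℝ, ∀ t, 0 < t → ‖u t‖ ≤ B) (hs : ∀ t, 0 < t → ε < t → u t = 0)
    (h1 : IntegrableOn (fun t => u t * wKer μ t y) (Set.Ioi 0))
    (h2 : IntegrableOn (fun t => w t * wKer (μ + 1) t y) (Set.Ioi 0)) :
    ∫ t in Set.Ioi (0 : ℝ), u t * wKer μ t y =
      -(1 / y : ℂ) * ∫ t in Set.Ioi (0 : ℝ), w t * wKer (μ + 1) t y := by
  have hyc : (y : ℂ) ≠ 0 := by exact_mod_cast hy.ne'
  set v : ℝ → ℂ := fun t => (1 / y : ℂ) * ((t : ℂ) ^ (μ + 1 / 2) * hankelKer (μ + 1) (t * y)) with hv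
  have hvd : ∀ t ∈ Set.Ioi (0 : ℝ), HasDerivAt v (wKer μ t y) t := by
    intro t ht
    refine ((hasDerivAt_cpow_mul_hankelKer hμ ht hy).const_mul (1 / y : ℂ)).congr_deriv ?_
    rw [wKer]
    field_simp
  have heq : ∀ t ∈ Set.Ioi (0 : ℝ), (t * w t) * v t = (1 / y : ℂ) * (w t * wKer (μ + 1) t y) := by
    intro t ht
    have htc : (t : ℂ) ≠ 0 := by exact_mod_cast (show (0 : ℝ) < t from ht).ne'
    simp only [hv, wKer]
    rw [show μ + 1 + 1 / 2 = μ + 1 / 2 + 1 by ring, Complex.cpow_add (μ + 1 / 2) 1 htc, Complex.cpow_one]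
    ring
  have h0 : Filter.Tendsto (u * v) (nhdsWithin 0 (Set.Ioi 0)) (nhds 0) := by
    obtain ⟨B, hB⟩ := hb
    have hv0 : Filter.Tendsto v (nhdsWithin 0 (Set.Ioi 0)) (nhds 0) := by
      have h := (tendsto_hankelKer_succ hμ hy).const_mul (1 / y : ℂ)
      rwa [mul_zero] at h
    have hz : Filter.Tendsto (fun t => B * ‖v t‖) (nhdsWithin 0 (Set.Ioi 0)) (nhds 0) := by
      simpa using hv0.norm.const_mul B
    refine squeeze_zero_norm' ?_ hz
    filter_upwards [self_mem_nhdsWithin] with t ht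
    rw [Pi.mul_apply, norm_mul]
    exact mul_le_mul_of_nonneg_right (hB t ht) (norm_nonneg _)
  have hinf : Filter.Tendsto (u * v) Filter.atTop (nhds 0) := by
    refine tendsto_const_nhds.congr' ?_
    filter_upwards [Filter.eventually_gt_atTop 0, Filter.eventually_gt_atTop ε] with t ht hte
    rw [Pi.mul_apply, hs t ht hte, zero_mul]
  have hi2 : IntegrableOn ((fun t : ℝ => t * w t) * v) (Set.Ioi 0) :=
    IntegrableOn.congr_fun (h2.const_mul (1 / y : ℂ)) (fun t ht => (heq t ht).symm) measurableSet_Ioi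
  rw [integral_Ioi_mul_deriv_eq_deriv_mul (fun t ht => hu t ht) hvd h1 hi2 h0 hinf,
    setIntegral_congr_fun measurableSet_Ioi heq, integral_const_mul]
  ring

lemma BoxFn.wDeriv_smooth {n : ℕ} {ε : ℝ} {G : (Fin n → ℝ) → ℂ} (hG : BoxFn n ε G) (i : Fin n) :
    ContDiffOn ℝ (⊤ : ℕ∞) (wDeriv n i G) (posOrthant n) := by
  unfold wDeriv
  have h1 : ContDiffOn ℝ (⊤ : ℕ∞) (fun x => fderiv ℝ G x (Pi.single i 1)) (posOrthant n) :=
    (hG.smooth.fderiv_of_isOpen (isOpen_posOrthant n) (by simp)).clm_apply contDiffOn_const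
  have h2 : ContDiffOn ℝ (⊤ : ℕ∞) (fun x : Fin n → ℝ => (x i)⁻¹) (posOrthant n) :=
    ContDiffOn.inv (contDiff_apply ℝ ℝ i).contDiffOn fun x hx => (hx i).ne'
  exact h2.smul h1

lemma BoxFn.wDeriv_supp {n : ℕ} {ε : ℝ} {G : (Fin n → ℝ) → ℂ} (hG : BoxFn n ε G) (i : Fin n)
    {x : Fin n → ℝ} (hx : x ∈ posOrthant n) (h : ∃ j, ε < x j) : wDeriv n i G x = 0 := by
  obtain ⟨j, hj⟩ := h
  have h1 : G =ᶠ[nhds x] fun _ => 0 := by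
    have h2 : ∀ᶠ z in nhds x, ε < z j :=
      (continuous_apply j).continuousAt.eventually (lt_mem_nhds hj)
    filter_upwards [h2, (isOpen_posOrthant n).mem_nhds hx] with z hz hzo using hG.supp z hzo ⟨j, hz⟩
  rw [wDeriv, h1.fderiv_eq]
  simp

lemma BoxFn.of_wDeriv {n : ℕ} {ε : ℝ} {G : (Fin n → ℝ) → ℂ} (hG : BoxFn n ε G) (i : Fin n)
    (hb : ∃ B : ℝ, ∀ x ∈ posOrthant n, ‖wDeriv n i G x‖ ≤ B) : BoxFn n ε (wDeriv n i G) :=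
  ⟨hG.wDeriv_smooth i, fun _ hx h => hG.wDeriv_supp i hx h, hb⟩

/-- The derivative of `G` along the `i`-th coordinate, in terms of `wDeriv`. -/
lemma BoxFn.hasDerivAt_slice {m : ℕ} {ε : ℝ} {G : (Fin (m + 1) → ℝ) → ℂ}
    (hG : BoxFn (m + 1) ε G) (i : Fin (m + 1)) {t : ℝ} {z : Fin m → ℝ}
    (h : (i.insertNth t z : Fin (m + 1) → ℝ) ∈ posOrthant (m + 1)) :
    HasDerivAt (fun s : ℝ => G (i.insertNth s z)) (t * wDeriv (m + 1) i G (i.insertNth t z)) t := by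
  have h1 : HasDerivAt (fun s : ℝ => (i.insertNth s z : Fin (m + 1) → ℝ)) (Pi.single i 1) t := by
    have h2 := hasDerivAt_update (i.insertNth t z : Fin (m + 1) → ℝ) i t
    refine h2.congr_of_eventuallyEq (Filter.Eventually.of_forall fun s => ?_)
    exact (Fin.update_insertNth (α := fun _ => ℝ) i t s z).symm
  have h3 : DifferentiableAt ℝ G (i.insertNth t z) :=
    (hG.smooth.differentiableOn (by simp)).differentiableAt ((isOpen_posOrthant _).mem_nhds h)
  refine (h3.hasFDerivAt.comp_hasDerivAt t h1).congr_deriv ?_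
  have ht : (t : ℂ) ≠ 0 := by
    have := h i
    rw [Fin.insertNth_apply_same] at this
    exact_mod_cast this.ne'
  rw [wDeriv, Fin.insertNth_apply_same, Complex.real_smul, ofReal_inv, mul_inv_cancel_left₀ ht]

lemma insertNth_mem_posOrthant {m : ℕ} (i : Fin (m + 1)) {t : ℝ} (ht : 0 < t) {z : Fin m → ℝ}
    (hz : z ∈ posOrthant m) : (i.insertNth t z : Fin (m + 1) → ℝ) ∈ posOrthant (m + 1) := by
  intro j
  rcases Fin.eq_self_or_eq_succAbove i j with rfl | ⟨k, rfl⟩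
  · rwa [Fin.insertNth_apply_same]
  · rw [Fin.insertNth_apply_succAbove]
    exact hz k

/-- Fubini's theorem with the `i`-th coordinate integrated first. -/
lemma integral_orthMeas_insertNth {m : ℕ} (i : Fin (m + 1)) {F : (Fin (m + 1) → ℝ) → ℂ}
    (hF : Integrable F (orthMeas (m + 1))) :
    (∀ᵐ z ∂(orthMeas m), IntegrableOn (fun t : ℝ => F (i.insertNth t z)) (Set.Ioi 0)) ∧
    ∫ x, F x ∂(orthMeas (m + 1)) =
      ∫ z, (∫ t in Set.Ioi (0 : ℝ), F (i.insertNth t z)) ∂(orthMeas m) := by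
  have hmp := (measurePreserving_piFinSuccAbove
    (fun _ : Fin (m + 1) => (volume : Measure ℝ).restrict (Set.Ioi 0)) i).symm
  have hF' := (hmp.integrable_comp_emb (MeasurableEquiv.measurableEmbedding _)).2 hF
  have h1 := hmp.integral_comp (MeasurableEquiv.measurableEmbedding _) F
  refine ⟨hF'.prod_left_ae, ?_⟩
  rw [← h1]
  exact integral_prod_symm _ hF'

/-- Integration by parts in the `i`-th coordinate gains a factor `1 / yᵢ`. -/
lemma BoxFn.shiftT_step {n : ℕ} {ε : ℝ} {G : (Fin n → ℝ) → ℂ} (hG : BoxFn n ε G) {i : Fin n}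
    (hG' : BoxFn n ε (wDeriv n i G)) {ν : ℂ} (hν : -(1 / 2 : ℝ) ≤ ν.re) (p : Fin n → ℕ)
    {y : Fin n → ℝ} (hy : y ∈ posOrthant n) :
    shiftT ν p G y = -(1 / y i : ℂ) * shiftT ν (p + Pi.single i 1) (wDeriv n i G) y := by
  obtain _ | m := n
  · exact i.elim0
  obtain ⟨ha1, h1⟩ := integral_orthMeas_insertNth i (hG.integrable_shift hν p y)
  obtain ⟨ha2, h2⟩ := integral_orthMeas_insertNth i
    (hG'.integrable_shift hν (p + Pi.single i 1) y)
  rw [shiftT, shiftT, h1, h2, ← integral_const_mul]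
  refine integral_congr_ae ?_
  filter_upwards [ha1, ha2, ae_mem_posOrthant m] with z hz1 hz2 hz
  set c : ℂ := ∏ k, wKer (ν + p (i.succAbove k)) (z k) (y (i.succAbove k)) with hc
  have e1 : ∀ t : ℝ, G (i.insertNth t z) * ∏ k, wKer (ν + p k)
      ((i.insertNth t z : Fin (m + 1) → ℝ) k) (y k) =
      (G (i.insertNth t z) * c) * wKer (ν + p i) t (y i) := by
    intro t
    rw [Fin.prod_univ_succAbove _ i]
    simp only [Fin.insertNth_apply_same, Fin.insertNth_apply_succAbove]
    rw [← hc]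
    ring
  have e2 : ∀ t : ℝ, wDeriv (m + 1) i G (i.insertNth t z) *
      ∏ k, wKer (ν + ((p + Pi.single i 1 : Fin (m + 1) → ℕ) k : ℕ))
        ((i.insertNth t z : Fin (m + 1) → ℝ) k) (y k) =
      (wDeriv (m + 1) i G (i.insertNth t z) * c) * wKer (ν + p i + 1) t (y i) := by
    intro t
    rw [Fin.prod_univ_succAbove _ i]
    simp only [Fin.insertNth_apply_same, Fin.insertNth_apply_succAbove, Pi.add_apply,
      Pi.single_eq_same, Pi.single_eq_of_ne (Fin.succAbove_ne i _), add_zero, Nat.cast_add,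
      Nat.cast_one, ← add_assoc]
    rw [← hc]
    ring
  simp only [e1] at hz1 ⊢
  simp only [e2] at hz2 ⊢
  refine integral_wKer_by_parts (re_add_natCast hν (p i)) (ε := ε) (hy i) ?_ ?_ ?_ hz1 hz2
  · intro t ht
    refine ((hG.hasDerivAt_slice i (insertNth_mem_posOrthant i ht hz)).mul_const c).congr_deriv ?_
    ring
  · obtain ⟨B, hB⟩ := hG.bdd
    refine ⟨B * ‖c‖, fun t ht => ?_⟩
    rw [norm_mul]
    exact mul_le_mul_of_nonneg_right (hB _ (insertNth_mem_posOrthant i ht hz)) (norm_nonneg _)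
  · intro t ht hte
    rw [hG.supp _ (insertNth_mem_posOrthant i ht hz) ⟨i, by rwa [Fin.insertNth_apply_same]⟩, zero_mul]

/-! ### Decay of the transform -/

lemma foldr_wDeriv_congr {n : ℕ} {p q : Fin n → ℕ} {l : List (Fin n)} (h : ∀ j ∈ l, p j = q j)
    (G : (Fin n → ℝ) → ℂ) :
    l.foldr (fun i g => (wDeriv n i)^[p i] g) G = l.foldr (fun i g => (wDeriv n i)^[q i] g) G := by
  induction l with
  | nil => rfl
  | cons a l ih =>
    rw [List.foldr_cons, List.foldr_cons, ih fun j hj => h j (List.mem_cons_of_mem _ hj),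
      h a List.mem_cons_self]

/-- The outermost operator in an iterated derivative can be split off: at the first index `i` of
the list with `pᵢ ≠ 0`. -/
lemma foldr_wDeriv_split {n : ℕ} {p : Fin n → ℕ} {l : List (Fin n)} (hl : l.Nodup)
    (h : ∃ j ∈ l, p j ≠ 0) (G : (Fin n → ℝ) → ℂ) :
    ∃ i ∈ l, ∃ q : Fin n → ℕ, p = q + Pi.single i 1 ∧
      l.foldr (fun i g => (wDeriv n i)^[p i] g) G =
        wDeriv n i (l.foldr (fun i g => (wDeriv n i)^[q i] g) G) := by
  induction l with
  | nil => simp at h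
  | cons a l ih =>
    rw [List.nodup_cons] at hl
    by_cases ha : p a = 0
    · obtain ⟨i, hi, q, hq, he⟩ := ih hl.2 (by simpa [ha] using h)
      refine ⟨i, List.mem_cons_of_mem _ hi, q, hq, ?_⟩
      have hqa : q a = 0 := by
        have := congrFun hq a
        rw [Pi.add_apply, ha] at this
        omega
      rw [List.foldr_cons, List.foldr_cons, ha, hqa, Function.iterate_zero, id, id, he]
    · refine ⟨a, List.mem_cons_self, p - Pi.single a 1, ?_, ?_⟩
      · funext j
        rcases eq_or_ne j a with rfl | hj
        · simp only [Pi.add_apply, Pi.sub_apply, Pi.single_eq_same]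
          omega
        · simp [Pi.single_eq_of_ne hj]
      · have h1 : ∀ j ∈ l, p j = (p - Pi.single a 1 : Fin n → ℕ) j := by
          intro j hj
          have hja : j ≠ a := fun e => hl.1 (e ▸ hj)
          simp [Pi.single_eq_of_ne hja]
        rw [List.foldr_cons, List.foldr_cons, ← foldr_wDeriv_congr h1,
          ← Function.iterate_succ_apply' (wDeriv n a)]
        congr 2
        simp only [Pi.sub_apply, Pi.single_eq_same]
        omega

/-- Integrating by parts `pᵢ` times in the `i`-th coordinate, for each `i`. -/
lemma BoxFn.shiftT_multiWDeriv {n : ℕ} {ε : ℝ} {G : (Fin n → ℝ) → ℂ} (hG : BoxFn n ε G)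
    (hb : ∀ p : Fin n → ℕ, ∃ B : ℝ, ∀ x ∈ posOrthant n, ‖multiWDeriv n p G x‖ ≤ B) {ν : ℂ}
    (hν : -(1 / 2 : ℝ) ≤ ν.re) (p : Fin n → ℕ) :
    BoxFn n ε (multiWDeriv n p G) ∧ ∀ y ∈ posOrthant n,
      shiftT ν 0 G y = (∏ i, (-(1 / y i : ℂ)) ^ p i) * shiftT ν p (multiWDeriv n p G) y := by
  induction hN : ∑ i, p i generalizing p with
  | zero =>
    have hp : p = 0 := funext fun i => (Finset.sum_eq_zero_iff.1 hN) i (Finset.mem_univ i)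
    have h0 : multiWDeriv n p G = G := by
      rw [multiWDeriv, foldr_wDeriv_congr (q := 0) fun j _ => congrFun hp j]
      induction List.finRange n with
      | nil => rfl
      | cons a l ih => rw [List.foldr_cons, ih]; rfl
    rw [h0]
    exact ⟨hG, fun y _ => by simp [hp]⟩
  | succ N ih =>
    have hex : ∃ j ∈ List.finRange n, p j ≠ 0 := by
      by_contra! hcon
      rw [Finset.sum_eq_zero fun i _ => hcon i (List.mem_finRange i)] at hN
      omega
    obtain ⟨i, -, q, hq, he⟩ := foldr_wDeriv_split (List.nodup_finRange n) hex G
    have he' : multiWDeriv n p G = wDeriv n i (multiWDeriv n q G) := he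
    have hqN : ∑ i, q i = N := by
      rw [hq] at hN
      simp only [Pi.add_apply, Finset.sum_add_distrib, Finset.sum_pi_single', Finset.mem_univ,
        if_true] at hN
      omega
    obtain ⟨hq1, hq2⟩ := ih q hqN
    have hbox : BoxFn n ε (wDeriv n i (multiWDeriv n q G)) :=
      hq1.of_wDeriv i (by rw [← he']; exact hb p)
    rw [he']
    refine ⟨hbox, fun y hy => ?_⟩
    rw [hq2 y hy, hq1.shiftT_step hbox hν q hy, ← hq]
    have hprod : ∏ j, (-(1 / y j : ℂ)) ^ p j = (∏ j, (-(1 / y j : ℂ)) ^ q j) * -(1 / y i : ℂ) := by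
      rw [hq]
      simp only [Pi.add_apply, pow_add, Finset.prod_mul_distrib]
      congr 1
      rw [Finset.prod_eq_single i]
      · simp
      · intro j _ hj
        simp [Pi.single_eq_of_ne hj]
      · simp
    rw [hprod]
    ring

/-- The transform decays like `∏ᵢ (1 + yᵢ²)⁻¹`: integrate by parts twice in each coordinate with
`yᵢ > 1`. -/
lemma BoxFn.shiftT_decay {n : ℕ} {ε : ℝ} {G : (Fin n → ℝ) → ℂ} (hG : BoxFn n ε G)
    (hb : ∀ p : Fin n → ℕ, ∃ B : ℝ, ∀ x ∈ posOrthant n, ‖multiWDeriv n p G x‖ ≤ B) {ν : ℂ}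
    (hν : -(1 / 2 : ℝ) ≤ ν.re) :
    ∃ C : ℝ, ∀ y ∈ posOrthant n, ‖shiftT ν 0 G y‖ ≤ C * ∏ i, (2 * (1 + y i ^ 2)⁻¹) := by
  choose C hC using fun p => (hG.shiftT_multiWDeriv hb hν p).1.shiftT_bounded hν p
  have hC0 : ∀ p, 0 ≤ C p := fun p => (norm_nonneg _).trans (hC p 0)
  refine ⟨∑ p ∈ Fintype.piFinset fun _ : Fin n => ({0, 2} : Finset ℕ), C p, fun y hy => ?_⟩
  set p : Fin n → ℕ := fun i => if y i ≤ 1 then 0 else 2 with hp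
  have hmem : p ∈ Fintype.piFinset fun _ : Fin n => ({0, 2} : Finset ℕ) := by
    rw [Fintype.mem_piFinset]
    intro i
    simp only [hp]
    split_ifs <;> simp
  have h1 : ‖shiftT ν p (multiWDeriv n p G) y‖ ≤
      ∑ p ∈ Fintype.piFinset fun _ : Fin n => ({0, 2} : Finset ℕ), C p :=
    (hC p y).trans (Finset.single_le_sum (fun q _ => hC0 q) hmem)
  rw [(hG.shiftT_multiWDeriv hb hν p).2 y hy, norm_mul, mul_comm, norm_prod]
  refine mul_le_mul h1 ?_ (Finset.prod_nonneg fun _ _ => norm_nonneg _)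
    (Finset.sum_nonneg fun q _ => hC0 q)
  refine Finset.prod_le_prod (fun _ _ => norm_nonneg _) fun i _ => ?_
  have hyi : 0 < y i := hy i
  have hn : ‖(-(1 / y i : ℂ))‖ = 1 / y i := by
    rw [norm_neg, norm_div, norm_one, Complex.norm_real, Real.norm_of_nonneg hyi.le]
  rw [norm_pow, hn, ← div_eq_mul_inv]
  by_cases h : y i ≤ 1
  · simp only [hp, if_pos h, pow_zero]
    rw [le_div_iff₀ (by positivity)]
    nlinarith
  · simp only [hp, if_neg h]
    rw [div_pow, one_pow, div_le_div_iff₀ (by positivity) (by positivity)]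
    nlinarith

/-! ### The testing space -/

lemma prod_cpow_posOrthant {n : ℕ} {x : Fin n → ℝ} (hx : x ∈ posOrthant n) (c : ℂ) :
    ((∏ i, x i : ℝ) : ℂ) ^ c = ∏ i, (x i : ℂ) ^ c := by
  classical
  induction (Finset.univ : Finset (Fin n)) using Finset.induction_on with
  | empty => simp
  | insert a s ha ih =>
    rw [Finset.prod_insert ha, Finset.prod_insert ha, ofReal_mul,
      Complex.mul_cpow_ofReal_nonneg (hx a).le (Finset.prod_nonneg fun i _ => (hx i).le), ih]

lemma memA.bounded {n : ℕ} {ε : ℝ} {ν : ℂ} {ζ : (Fin n → ℝ) → ℂ} (h : memA n ε ν ζ)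
    (p : Fin n → ℕ) :
    ∃ B : ℝ, ∀ x ∈ posOrthant n, ‖multiWDeriv n p (weightFn n ν ζ) x‖ ≤ B := by
  refine ⟨(Tsem n ν p ζ).toReal, fun x hx => ?_⟩
  have h1 : ((‖multiWDeriv n p (weightFn n ν ζ) x‖₊ : ℝ≥0) : ℝ≥0∞) ≤ Tsem n ν p ζ :=
    le_iSup₂ (f := fun ω (_ : ω ∈ posOrthant n) =>
      (‖multiWDeriv n p (weightFn n ν ζ) ω‖₊ : ℝ≥0∞)) x hx
  have h2 := ENNReal.toReal_mono (h.2.2 p).ne h1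
  simpa using h2

lemma memA.boxFn {n : ℕ} {ε : ℝ} {ν : ℂ} {ζ : (Fin n → ℝ) → ℂ} (h : memA n ε ν ζ) :
    BoxFn n ε (weightFn n ν ζ) := by
  refine ⟨?_, fun x hx hi => ?_, ?_⟩
  · have h1 : ContDiffOn ℝ (⊤ : ℕ∞) (fun x : Fin n → ℝ => ((∏ i, x i : ℝ) : ℂ) ^ (-ν - 1 / 2))
        (posOrthant n) := by
      have h2 : ContDiffOn ℝ (⊤ : ℕ∞) (fun x : Fin n → ℝ =>
          Complex.exp (((Real.log (∏ i, x i) : ℝ) : ℂ) * (-ν - 1 / 2))) (posOrthant n) := by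
        have h3 : ContDiffOn ℝ (⊤ : ℕ∞) (fun x : Fin n → ℝ => Real.log (∏ i, x i))
            (posOrthant n) :=
          ContDiffOn.log (contDiff_prod fun i _ => contDiff_apply ℝ ℝ i).contDiffOn
            fun x hx => (Finset.prod_pos fun i _ => hx i).ne'
        exact ((Complex.ofRealCLM.contDiff.comp_contDiffOn h3).mul contDiffOn_const).cexp
      refine h2.congr fun x hx => ?_
      have hp : (0 : ℝ) < ∏ i, x i := Finset.prod_pos fun i _ => hx i
      rw [Complex.cpow_def_of_ne_zero (by exact_mod_cast hp.ne'), ← Complex.ofReal_log hp.le]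
    exact h1.mul h.1
  · rw [weightFn, h.2.1 x hx hi, mul_zero]
  · have h0 := h.bounded 0
    have e : multiWDeriv n 0 (weightFn n ν ζ) = weightFn n ν ζ := by
      rw [multiWDeriv]
      induction List.finRange n with
      | nil => rfl
      | cons a l ih => rw [List.foldr_cons, ih]; rfl
    rwa [e] at h0

lemma eq_prod_mul_weightFn {n : ℕ} {ν : ℂ} {ζ : (Fin n → ℝ) → ℂ} {x : Fin n → ℝ}
    (hx : x ∈ posOrthant n) : ζ x = weightFn n ν ζ x * ∏ k, (x k : ℂ) ^ (ν + 1 / 2) := by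
  have hp : ((∏ i, x i : ℝ) : ℂ) ≠ 0 := by
    exact_mod_cast (Finset.prod_pos fun i _ => hx i).ne'
  rw [← prod_cpow_posOrthant hx, weightFn, mul_right_comm, ← Complex.cpow_add _ _ hp,
    show -ν - 1 / 2 + (ν + 1 / 2) = 0 by ring, Complex.cpow_zero, one_mul]

lemma memA.integrable_bounded {n : ℕ} {ε : ℝ} {ν : ℂ} (hν : -(1 / 2 : ℝ) ≤ ν.re)
    {ζ : (Fin n → ℝ) → ℂ} (h : memA n ε ν ζ) :
    Integrable ζ (orthMeas n) ∧ ∃ B : ℝ, ∀ x ∈ posOrthant n, ‖ζ x‖ ≤ B := by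
  have hM : ∀ t : ℝ, 0 < t → t ≤ ε → ‖(t : ℂ) ^ (ν + 1 / 2)‖ ≤ |ε| ^ (ν.re + 1 / 2) := by
    intro t ht hte
    rw [Complex.norm_cpow_eq_rpow_re_of_pos ht, re_add_half]
    exact Real.rpow_le_rpow ht.le (hte.trans (le_abs_self ε)) (by linarith)
  constructor
  · obtain ⟨b, hb, hF⟩ := h.boxFn.dominated (fun _ => |ε| ^ (ν.re + 1 / 2)) fun _ => by positivity
    refine hb.mono' (aestronglyMeasurable_of_continuousOn h.1.continuousOn) ?_
    filter_upwards [ae_mem_posOrthant n] with x hx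
    rw [eq_prod_mul_weightFn (ν := ν) (ζ := ζ) hx]
    exact hF (fun _ t => (t : ℂ) ^ (ν + 1 / 2)) (fun _ => hM) x hx
  · obtain ⟨B, hB⟩ := h.boxFn.bdd
    refine ⟨|B| * ∏ _k : Fin n, |ε| ^ (ν.re + 1 / 2), fun x hx => ?_⟩
    by_cases hi : ∃ i, ε < x i
    · rw [h.2.1 x hx hi, norm_zero]
      positivity
    · push Not at hi
      rw [eq_prod_mul_weightFn (ν := ν) (ζ := ζ) hx, norm_mul, norm_prod]
      exact mul_le_mul ((hB x hx).trans (le_abs_self B))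
        (Finset.prod_le_prod (fun _ _ => norm_nonneg _) fun k _ => hM _ (hx k) (hi k))
        (Finset.prod_nonneg fun _ _ => norm_nonneg _) (abs_nonneg _)

/-- The Hankel transform of `ζ` is `shiftT` with `p = 0` of the weighted function. -/
lemma hankelT_eq_shiftT {n : ℕ} (ν : ℂ) (ζ : (Fin n → ℝ) → ℂ) (y : Fin n → ℝ) :
    hankelT ν ζ y = shiftT ν 0 (weightFn n ν ζ) y := by
  refine integral_congr_ae ?_
  filter_upwards [ae_mem_posOrthant n] with x hx
  simp only [wKer, Pi.zero_apply, Nat.cast_zero, add_zero, Finset.prod_mul_distrib]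
  rw [← mul_assoc, ← eq_prod_mul_weightFn hx, prodKer]

lemma memA.integrable_hankelT {n : ℕ} {ε : ℝ} {ν : ℂ} (hν : -(1 / 2 : ℝ) ≤ ν.re)
    {ζ : (Fin n → ℝ) → ℂ} (h : memA n ε ν ζ) : Integrable (hankelT ν ζ) (orthMeas n) := by
  obtain ⟨C, hC⟩ := h.boxFn.shiftT_decay h.bounded hν
  have hint : Integrable (fun y : Fin n → ℝ => ∏ i, (2 * (1 + y i ^ 2)⁻¹)) (orthMeas n) :=
    Integrable.fintype_prod (f := fun _ t => 2 * (1 + t ^ 2)⁻¹) fun i =>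
      (integrable_inv_one_add_sq.const_mul 2).restrict
  refine (hint.const_mul C).mono'
    (aestronglyMeasurable_of_continuousOn (hankelT_continuousOn hν (h.integrable_bounded hν).1)) ?_
  filter_upwards [ae_mem_posOrthant n] with y hy
  rw [hankelT_eq_shiftT]
  exact hC y hy

/-! ### Inversion -/

lemma memA.hankelT_hankelT {n : ℕ} {ε : ℝ} {ν : ℂ} (hν : -(1 / 2 : ℝ) ≤ ν.re)
    {ζ : (Fin n → ℝ) → ℂ} (h : memA n ε ν ζ) {x : Fin n → ℝ} (hx : x ∈ posOrthant n) :
    hankelT ν (hankelT ν ζ) x = ζ x := by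
  obtain ⟨hζ, B, hB⟩ := h.integrable_bounded hν
  have hT := h.integrable_hankelT hν
  obtain ⟨C, -, hC⟩ := hankelT_bounded hν hT
  have hc := hankelT_continuousOn hν hT
  refine sub_eq_zero.1 (eq_zero_of_gauss_moments (D := fun z => hankelT ν (hankelT ν ζ) z - ζ z)
    (C := C + B) hν (hc.sub h.1.continuousOn) ?_ ?_ hx)
  · exact fun z hz => (norm_sub_le _ _).trans (add_le_add (hC z) (hB z hz))
  · intro a ha
    have hi1 : Integrable (fun z => hankelT ν (hankelT ν ζ) z * prodGauss ν a z) (orthMeas n) :=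
      (prodGauss_integrable hν ha).bdd_mul (c := C) (aestronglyMeasurable_of_continuousOn hc)
        (Filter.Eventually.of_forall hC)
    have hi2 : Integrable (fun z => ζ z * prodGauss ν a z) (orthMeas n) :=
      (prodGauss_integrable hν ha).bdd_mul (c := B) hζ.aestronglyMeasurable
        (by filter_upwards [ae_mem_posOrthant n] with z hz using hB z hz)
    simp only [sub_mul]
    rw [integral_sub hi1 hi2, hankelT_hankelT_moments hν hζ hT ha, sub_self]

lemma prod_sqrt_mul_besselJ (ν : ℂ) {n : ℕ} {x y : Fin n → ℝ} (hx : x ∈ posOrthant n)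
    (hy : y ∈ posOrthant n) :
    ∏ k, ((x k * y k : ℝ) : ℂ) ^ (1 / 2 : ℂ) * besselJ ν ((x k * y k : ℝ) : ℂ) = prodKer ν x y :=
  Finset.prod_congr rfl fun k _ => sqrt_mul_besselJ ν (mul_pos (hx k) (hy k))

/-- inversion formula for the `n`-dimensional Hankel transformation of
order `ν`, `Re ν ≥ −1/2`, on the testing space `𝒜_{ν,ε}`. -/
theorem hankel_inversion (n : ℕ) (hn : 1 ≤ n) (ε : ℝ) (hε : 0 < ε)
    (ν : ℂ) (hν : -(1 / 2 : ℝ) ≤ ν.re)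
    (ζ : (Fin n → ℝ) → ℂ) (hζ : memA n ε ν ζ)
    (η : (Fin n → ℝ) → ℂ)
    (hη : ∀ y : Fin n → ℝ, η y =
      ∫ ω in posOrthant n, ζ ω *
        ∏ k, ((ω k * y k : ℝ) : ℂ) ^ (1 / 2 : ℂ) * besselJ ν ((ω k * y k : ℝ) : ℂ)) :
    ∀ ω ∈ posOrthant n,
      Filter.Tendsto (fun s : ℝ =>
        ∫ y in Set.pi Set.univ (fun _ : Fin n => Set.Ioo (0 : ℝ) s),
          η y * ∏ k, ((ω k * y k : ℝ) : ℂ) ^ (1 / 2 : ℂ) * besselJ ν ((ω k * y k : ℝ) : ℂ))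
        Filter.atTop (nhds (ζ ω)) := by
  intro ω hω
  have hη' : ∀ y ∈ posOrthant n, η y = hankelT ν ζ y := by
    intro y hy
    rw [hη, hankelT, restrict_posOrthant]
    refine integral_congr_ae ?_
    filter_upwards [ae_mem_posOrthant n] with x hx
    rw [prod_sqrt_mul_besselJ ν hx hy]
  set S : ℝ → Set (Fin n → ℝ) := fun s => Set.pi Set.univ fun _ : Fin n => Set.Ioo (0 : ℝ) s with hS
  have hSm : ∀ s, MeasurableSet (S s) := fun s => MeasurableSet.univ_pi fun _ => measurableSet_Ioo
  have hSsub : ∀ s, S s ⊆ posOrthant n := fun s y hy i => (hy i (Set.mem_univ i)).1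
  have hcover : AECover (orthMeas n) Filter.atTop S := by
    refine ⟨?_, hSm⟩
    filter_upwards [ae_mem_posOrthant n] with y hy
    have h1 : ∀ᶠ s in Filter.atTop, ∀ i, y i < s :=
      Filter.eventually_all.2 fun i => Filter.eventually_gt_atTop (y i)
    filter_upwards [h1] with s hs i _ using ⟨hy i, hs i⟩
  have hlim := hcover.integral_tendsto_of_countably_generated
    (integrable_mul_prodKer hν (hζ.integrable_hankelT hν) ω)
  have hval : ∫ y, hankelT ν ζ y * prodKer ν y ω ∂(orthMeas n) = ζ ω := hζ.hankelT_hankelT hν hω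
  rw [hval] at hlim
  refine hlim.congr fun s => ?_
  rw [← restrict_posOrthant, Measure.restrict_restrict (hSm s),
    Set.inter_eq_left.2 (hSsub s)]
  refine setIntegral_congr_fun (hSm s) fun y hy => ?_
  rw [hη' y (hSsub s hy), prod_sqrt_mul_besselJ ν hω (hSsub s hy), prodKer_comm]
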